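/- arXiv:1910.09529 — 8 statements merged into one kernel-verified Lean document; each statement's English description precedes it below -/
import Mathlib

section
/- Let f : ℝ^d → ℝ be convex and differentiable and let x* be a minimizer of f with f* = f(x*). Let x⁰, x¹, x² ∈ ℝ^d (playing the roles of x^{k-1}, x^k, x^{k+1}) and λ₀, λ₁ > 0 satisfy x¹ = x⁰ − λ₀∇f(x⁰), x² = x¹ − λ₁∇f(x¹), and 2λ₁‖∇f(x¹) − ∇f(x⁰)‖ ≤ ‖x¹ − x⁰‖. Set θ = λ₁/λ₀. Then ‖x² − x*‖² + (1/2)‖x² − x¹‖² + 2λ₁(1+θ)(f(x¹) − f*) ≤ ‖x¹ − x*‖² + (1/2)‖x¹ − x⁰‖² + 2λ₁θ(f(x⁰) − f*). -/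
open scoped RealInnerProductSpace

/-!
Expanding `‖x₂ - z‖²` and using the subgradient inequality at `x₁` towards `z` leaves the error
term `‖x₂ - x₁‖² = l₁² ⟪g₁, g₁⟫`. To absorb it, split the second factor as `g₁ = (g₁ - g₀) + g₀`.
The part `⟪g₁, g₁ - g₀⟫` is controlled by Cauchy–Schwarz, the step size condition and Young's
inequality. The part `⟪g₁, g₀⟫` is controlled by the subgradient inequality at `x₁` towards `x₀`,
because `x₀ - x₁ = l₀ • g₀`.
-/

section InnerProductSpace

variable {E : Type*} [SeminormedAddCommGroup E] [InnerProductSpace ℝ E]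

/-- `g` is a subgradient of `f` at `x`: the affine function through `(x, f x)` with slope `g`
minorizes `f` on the whole space. For a differentiable convex function, the gradient is a
subgradient at each point. -/
def IsSubgradientAt (f : E → ℝ) (g x : E) : Prop :=
  ∀ y, f x + ⟪g, y - x⟫ ≤ f y

theorem two_mul_inner_le_of_two_mul_norm_le {u v : E} {r : ℝ} (hv : 2 * ‖v‖ ≤ r) :
    2 * ⟪u, v⟫ ≤ (1 / 2) * ‖u‖ ^ 2 + (1 / 2) * r ^ 2 :=
  calc
    2 * ⟪u, v⟫ ≤ 2 * (‖u‖ * ‖v‖) := by gcongr; exact real_inner_le_norm u v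
    _ = ‖u‖ * (2 * ‖v‖) := by ring
    _ ≤ ‖u‖ * r := by gcongr
    _ ≤ (1 / 2) * ‖u‖ ^ 2 + (1 / 2) * r ^ 2 := by linarith [two_mul_le_add_sq ‖u‖ r]

namespace IsSubgradientAt

variable {f : E → ℝ} {g g₀ g₁ x x₀ x₁ : E} {l l₀ l₁ : ℝ}

theorem norm_sub_smul_sub_sq_le (hg : IsSubgradientAt f g x) (hl : 0 ≤ l) (z : E) :
    ‖x - l • g - z‖ ^ 2 ≤ ‖x - z‖ ^ 2 - 2 * l * (f x - f z) + ‖l • g‖ ^ 2 := by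
  have sub_le_inner : f x - f z ≤ ⟪x - z, g⟫ := by
    have h := hg z
    rw [← neg_sub x z, inner_neg_right, real_inner_comm] at h
    linarith
  calc
    ‖x - l • g - z‖ ^ 2 = ‖x - z‖ ^ 2 - 2 * l * ⟪x - z, g⟫ + ‖l • g‖ ^ 2 := by
      rw [sub_right_comm, norm_sub_sq_real, real_inner_smul_right, mul_assoc]
    _ ≤ ‖x - z‖ ^ 2 - 2 * l * (f x - f z) + ‖l • g‖ ^ 2 := by gcongr

theorem mul_inner_le_sub (hg : IsSubgradientAt f g₁ (x - l • g)) :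
    l * ⟪g₁, g⟫ ≤ f x - f (x - l • g) := by
  have h := hg x
  rw [sub_sub_cancel, real_inner_smul_right] at h
  linarith

theorem three_halves_mul_norm_smul_sq_le (hg₁ : IsSubgradientAt f g₁ x₁)
    (hl₀ : 0 < l₀) (hl₁ : 0 ≤ l₁) (hx₁ : x₁ = x₀ - l₀ • g₀)
    (hstep : 2 * l₁ * ‖g₁ - g₀‖ ≤ ‖x₁ - x₀‖) :
    (3 / 2) * ‖l₁ • g₁‖ ^ 2 ≤
      (1 / 2) * ‖x₁ - x₀‖ ^ 2 + 2 * l₁ * (l₁ / l₀) * (f x₀ - f x₁) := by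
  have inner_difference : 2 * ⟪l₁ • g₁, l₁ • (g₁ - g₀)⟫ ≤
      (1 / 2) * ‖l₁ • g₁‖ ^ 2 + (1 / 2) * ‖x₁ - x₀‖ ^ 2 :=
    two_mul_inner_le_of_two_mul_norm_le <| by
      rwa [norm_smul_of_nonneg hl₁, ← mul_assoc]
  have inner_previous : 2 * ⟪l₁ • g₁, l₁ • g₀⟫ ≤ 2 * l₁ * (l₁ / l₀) * (f x₀ - f x₁) :=
    calc
      2 * ⟪l₁ • g₁, l₁ • g₀⟫ = 2 * l₁ * (l₁ / l₀) * (l₀ * ⟪g₁, g₀⟫) := by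
        rw [real_inner_smul_left, real_inner_smul_right]
        field_simp
      _ ≤ 2 * l₁ * (l₁ / l₀) * (f x₀ - f x₁) := by
        subst hx₁
        gcongr
        exact hg₁.mul_inner_le_sub
  have norm_sq_split : ‖l₁ • g₁‖ ^ 2 =
      ⟪l₁ • g₁, l₁ • (g₁ - g₀)⟫ + ⟪l₁ • g₁, l₁ • g₀⟫ := by
    rw [← inner_add_right, ← smul_add, sub_add_cancel, real_inner_self_eq_norm_sq]
  linarith

end IsSubgradientAt

theorem adgd_energy_lemma_general {f : E → ℝ} {g₀ g₁ x₀ x₁ x₂ : E} {l₀ l₁ : ℝ}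
    (hg₁ : IsSubgradientAt f g₁ x₁) (hl₀ : 0 < l₀) (hl₁ : 0 ≤ l₁)
    (hx₁ : x₁ = x₀ - l₀ • g₀) (hx₂ : x₂ = x₁ - l₁ • g₁)
    (hstep : 2 * l₁ * ‖g₁ - g₀‖ ≤ ‖x₁ - x₀‖) (z : E) :
    ‖x₂ - z‖ ^ 2 + (1 / 2) * ‖x₂ - x₁‖ ^ 2 + 2 * l₁ * (1 + l₁ / l₀) * (f x₁ - f z) ≤
      ‖x₁ - z‖ ^ 2 + (1 / 2) * ‖x₁ - x₀‖ ^ 2 + 2 * l₁ * (l₁ / l₀) * (f x₀ - f z) := by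
  have distance_bound : ‖x₂ - z‖ ^ 2 ≤
      ‖x₁ - z‖ ^ 2 - 2 * l₁ * (f x₁ - f z) + ‖l₁ • g₁‖ ^ 2 :=
    hx₂ ▸ hg₁.norm_sub_smul_sub_sq_le hl₁ z
  have step_bound : (3 / 2) * ‖l₁ • g₁‖ ^ 2 ≤
      (1 / 2) * ‖x₁ - x₀‖ ^ 2 + 2 * l₁ * (l₁ / l₀) * (f x₀ - f x₁) :=
    hg₁.three_halves_mul_norm_smul_sq_le hl₀ hl₁ hx₁ hstep
  have norm_step : ‖x₂ - x₁‖ = ‖l₁ • g₁‖ := by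
    rw [hx₂, sub_sub_cancel_left, norm_neg]
  rw [norm_step]
  linarith

end InnerProductSpace

/-- Lemma 1 (one-step energy inequality) of "Adaptive gradient descent without descent". -/
theorem adgd_energy_lemma {d : ℕ}
    (f : EuclideanSpace ℝ (Fin d) → ℝ)
    (f' : EuclideanSpace ℝ (Fin d) → EuclideanSpace ℝ (Fin d))
    (hdiff : ∀ x, HasGradientAt f (f' x) x)
    (hconv : ∀ x y, f x + ⟪f' x, y - x⟫ ≤ f y)
    (xstar : EuclideanSpace ℝ (Fin d))
    (hmin : ∀ y, f xstar ≤ f y)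
    (x0 x1 x2 : EuclideanSpace ℝ (Fin d)) (l0 l1 : ℝ)
    (hl0 : 0 < l0) (hl1 : 0 < l1)
    (hx1 : x1 = x0 - l0 • f' x0) (hx2 : x2 = x1 - l1 • f' x1)
    (hstep : 2 * l1 * ‖f' x1 - f' x0‖ ≤ ‖x1 - x0‖) :
    ‖x2 - xstar‖ ^ 2 + (1 / 2) * ‖x2 - x1‖ ^ 2
      + 2 * l1 * (1 + l1 / l0) * (f x1 - f xstar)
    ≤ ‖x1 - xstar‖ ^ 2 + (1 / 2) * ‖x1 - x0‖ ^ 2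
      + 2 * l1 * (l1 / l0) * (f x0 - f xstar) :=
  adgd_energy_lemma_general (hconv x1) hl0 hl1.le hx1 hx2 hstep xstar
end

section
/- Let f : ℝ^d → ℝ be convex and differentiable, x* a minimizer of f with f* = f(x*), and let (x^k)_{k≥0} in ℝ^d and (λ_k)_{k≥0} with λ_k > 0 satisfy, for all k ≥ 0, x^{k+1} = x^k − λ_k∇f(x^k), and for all k ≥ 1 the two stepsize conditions 2λ_k‖∇f(x^k) − ∇f(x^{k−1})‖ ≤ ‖x^k − x^{k−1}‖ and λ_{k+1}² ≤ (1 + θ_k)λ_k², where θ_k = λ_k/λ_{k−1}. Define the energy E_k = ‖x^k − x*‖² + (1/2)‖x^k − x^{k−1}‖² + 2λ_kθ_k(f(x^{k−1}) − f*) for k ≥ 1. Then E_{k+1} ≤ E_k for all k ≥ 1. -/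
open scoped RealInnerProductSpace

/-!
Write `g`, `h` for the gradients at the current and previous iterates and `l`, `m` for the
stepsizes there. The usual expansion of `‖x - l • g - z‖ ^ 2` leaves the error `‖l • g‖ ^ 2`, which
no smoothness constant is available to absorb. Instead, the first stepsize condition together with
`2 * ‖g - h‖ ^ 2 + 2 * ⟪g, h⟫ = 3 / 2 * ‖g‖ ^ 2 + 1 / 2 * ‖g - 2 • h‖ ^ 2` bounds
`3 / 2 * ‖l • g‖ ^ 2` by half the previous squared displacement plus `2 * l ^ 2 * ⟪g, h⟫`. Since
`m • h` is the previous displacement, convexity turns the last term into a decrease of `f` weighted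
by `2 * l * (l / m)`, and the second stepsize condition makes the function values telescope.
-/

section InnerProductSpace

variable {E : Type*} [NormedAddCommGroup E] [InnerProductSpace ℝ E]

/-- The Lyapunov energy `E_k` of adaptive gradient descent with iterates `x` and stepsizes `lam`,
relative to a reference point `z` (a minimizer of `f` in the applications). It is meaningful for
`1 ≤ k` only: at `k = 0` the truncated subtraction `k - 1` gives `0`. -/
noncomputable def adgdEnergy (f : E → ℝ) (z : E) (x : ℕ → E) (lam : ℕ → ℝ) (k : ℕ) : ℝ :=
  ‖x k - z‖ ^ 2 + (1 / 2) * ‖x k - x (k - 1)‖ ^ 2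
    + 2 * lam k * (lam k / lam (k - 1)) * (f (x (k - 1)) - f z)

theorem norm_sub_smul_sub_sq_le_of_subgradient {f : E → ℝ} {x z g : E} {l : ℝ} (hl : 0 ≤ l)
    (hg : f x + ⟪g, z - x⟫ ≤ f z) :
    ‖x - l • g - z‖ ^ 2 ≤ ‖x - z‖ ^ 2 - 2 * l * (f x - f z) + ‖l • g‖ ^ 2 := by
  have expansion : ‖x - l • g - z‖ ^ 2 = ‖x - z‖ ^ 2 + 2 * l * ⟪g, z - x⟫ + ‖l • g‖ ^ 2 := by
    rw [sub_right_comm, norm_sub_sq_real, inner_smul_right, real_inner_comm, ← neg_sub z x,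
      inner_neg_right]
    ring
  have inner_le : 2 * l * ⟪g, z - x⟫ ≤ 2 * l * (f z - f x) := by
    gcongr
    linarith
  linarith

theorem three_halves_norm_sq_le (g h : E) :
    3 / 2 * ‖g‖ ^ 2 ≤ 2 * ‖g - h‖ ^ 2 + 2 * ⟪g, h⟫ := by
  have norm_sub_two_smul_sq : ‖g - (2 : ℝ) • h‖ ^ 2 = ‖g‖ ^ 2 - 4 * ⟪g, h⟫ + 4 * ‖h‖ ^ 2 := by
    rw [norm_sub_sq_real, inner_smul_right, norm_smul, Real.norm_ofNat]
    ring
  linarith [norm_sub_sq_real g h, sq_nonneg ‖g - (2 : ℝ) • h‖]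

theorem three_halves_norm_smul_sq_le {g h v : E} {l : ℝ} (hl : 0 ≤ l)
    (hstep : 2 * l * ‖g - h‖ ≤ ‖v‖) :
    3 / 2 * ‖l • g‖ ^ 2 ≤ 1 / 2 * ‖v‖ ^ 2 + 2 * l ^ 2 * ⟪g, h⟫ := by
  have hstep_sq : (2 * l * ‖g - h‖) ^ 2 ≤ ‖v‖ ^ 2 := by gcongr
  calc 3 / 2 * ‖l • g‖ ^ 2
      = l ^ 2 * (3 / 2 * ‖g‖ ^ 2) := by rw [norm_smul, Real.norm_of_nonneg hl]; ring
    _ ≤ l ^ 2 * (2 * ‖g - h‖ ^ 2 + 2 * ⟪g, h⟫) := by gcongr; exact three_halves_norm_sq_le g h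
    _ = 1 / 2 * (2 * l * ‖g - h‖) ^ 2 + 2 * l ^ 2 * ⟪g, h⟫ := by ring
    _ ≤ 1 / 2 * ‖v‖ ^ 2 + 2 * l ^ 2 * ⟪g, h⟫ := by gcongr

theorem sq_mul_inner_le_of_subgradient {f : E → ℝ} {x y g h : E} {l m : ℝ} (hm : 0 < m)
    (hy : y = x - m • h) (hg : f y + ⟪g, x - y⟫ ≤ f x) :
    l ^ 2 * ⟪g, h⟫ ≤ l * (l / m) * (f x - f y) := by
  have displacement : x - y = m • h := by rw [hy, sub_sub_cancel]
  rw [displacement, inner_smul_right] at hg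
  have weight_nonneg : 0 ≤ l * (l / m) := by
    rw [← mul_div_assoc]
    exact div_nonneg (mul_self_nonneg l) hm.le
  calc l ^ 2 * ⟪g, h⟫ = l * (l / m) * (m * ⟪g, h⟫) := by field_simp
    _ ≤ l * (l / m) * (f x - f y) := by gcongr; linarith

theorem mul_div_le_of_sq_le {r l c : ℝ} (hl : 0 < l) (hr : r ^ 2 ≤ c * l ^ 2) :
    r * (r / l) ≤ c * l := by
  rw [← mul_div_assoc, div_le_iff₀ hl]
  linarith

theorem adgd_energy_decreasing_general (f : E → ℝ) (z : E) (x g : ℕ → E) (lam : ℕ → ℝ)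
    (hg : ∀ k y, f (x k) + ⟪g k, y - x k⟫ ≤ f y)
    (hz : ∀ k, f z ≤ f (x k))
    (hlam : ∀ k, 0 < lam k)
    (hupd : ∀ k, x (k + 1) = x k - lam k • g k)
    (hstep1 : ∀ k, 1 ≤ k → 2 * lam k * ‖g k - g (k - 1)‖ ≤ ‖x k - x (k - 1)‖)
    (hstep2 : ∀ k, 1 ≤ k → lam (k + 1) ^ 2 ≤ (1 + lam k / lam (k - 1)) * lam k ^ 2)
    (k : ℕ) (hk : 1 ≤ k) :
    adgdEnergy f z x lam (k + 1) ≤ adgdEnergy f z x lam k := by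
  have hprev : x k = x (k - 1) - lam (k - 1) • g (k - 1) := by
    simpa only [Nat.sub_add_cancel hk] using hupd (k - 1)
  have dist_le := norm_sub_smul_sub_sq_le_of_subgradient (hlam k).le (hg k z)
  have displacement_le := three_halves_norm_smul_sq_le (hlam k).le (hstep1 k hk)
  have inner_le := sq_mul_inner_le_of_subgradient (l := lam k) (hlam (k - 1)) hprev (hg k _)
  have weight_le := mul_le_mul_of_nonneg_right
    (mul_div_le_of_sq_le (hlam k) (hstep2 k hk)) (sub_nonneg.2 (hz k))
  have displacement : x (k + 1) - x k = -(lam k • g k) := by rw [hupd, sub_sub_cancel_left]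
  simp only [adgdEnergy, Nat.add_sub_cancel]
  rw [displacement, norm_neg, hupd]
  linarith

end InnerProductSpace

/-- Monotonicity of the Lyapunov energy for adaptive gradient descent. -/
theorem adgd_energy_decreasing {d : ℕ}
    (f : EuclideanSpace ℝ (Fin d) → ℝ)
    (f' : EuclideanSpace ℝ (Fin d) → EuclideanSpace ℝ (Fin d))
    (hdiff : ∀ x, HasGradientAt f (f' x) x)
    (hconv : ∀ x y, f x + ⟪f' x, y - x⟫ ≤ f y)
    (xstar : EuclideanSpace ℝ (Fin d))
    (hmin : ∀ y, f xstar ≤ f y)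
    (x : ℕ → EuclideanSpace ℝ (Fin d)) (lam : ℕ → ℝ)
    (hlam : ∀ k, 0 < lam k)
    (hupd : ∀ k, x (k + 1) = x k - lam k • f' (x k))
    (hstep1 : ∀ k, 1 ≤ k → 2 * lam k * ‖f' (x k) - f' (x (k - 1))‖ ≤ ‖x k - x (k - 1)‖)
    (hstep2 : ∀ k, 1 ≤ k → lam (k + 1) ^ 2 ≤ (1 + lam k / lam (k - 1)) * lam k ^ 2) :
    ∀ k, 1 ≤ k →
      ‖x (k + 1) - xstar‖ ^ 2 + (1 / 2) * ‖x (k + 1) - x k‖ ^ 2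
          + 2 * lam (k + 1) * (lam (k + 1) / lam k) * (f (x k) - f xstar)
      ≤ ‖x k - xstar‖ ^ 2 + (1 / 2) * ‖x k - x (k - 1)‖ ^ 2
          + 2 * lam k * (lam k / lam (k - 1)) * (f (x (k - 1)) - f xstar) := by
  exact adgd_energy_decreasing_general f xstar x (fun k => f' (x k)) lam (fun k => hconv (x k))
    (fun k => hmin (x k)) hlam hupd hstep1 hstep2
end

section
/- Let f : ℝ^d → ℝ be convex and differentiable, x* a minimizer of f with f* = f(x*), and let (x^k)_{k≥0} in ℝ^d and (λ_k)_{k≥0} with λ_k > 0 satisfy, for all k ≥ 0, x^{k+1} = x^k − λ_k∇f(x^k), and for all k ≥ 1 the two stepsize conditions 2λ_k‖∇f(x^k) − ∇f(x^{k−1})‖ ≤ ‖x^k − x^{k−1}‖ and λ_{k+1}² ≤ (1 + θ_k)λ_k², where θ_k = λ_k/λ_{k−1}. Define D = ‖x¹ − x*‖² + (1/2)‖x¹ − x⁰‖² + 2λ₁θ₁(f(x⁰) − f*), weights w_i = λ_i(1+θ_i) − λ_{i+1}θ_{i+1}, S_k = λ_k(1+θ_k) + Σ_{i=1}^{k−1}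 w_i, and the ergodic iterate x̂^k = (λ_k(1+θ_k)x^k + Σ_{i=1}^{k−1} w_i x^i)/S_k. Then for every k ≥ 1 it holds that S_k = Σ_{i=1}^{k} λ_i + λ₁θ₁ and f(x̂^k) − f* ≤ D/(2S_k). -/
open scoped RealInnerProductSpace BigOperators

/-- The weights `w_i = λ_i (1 + θ_i) − λ_{i+1} θ_{i+1}` of Theorem 2. -/
noncomputable def adgdW (lam : ℕ → ℝ) (i : ℕ) : ℝ :=
  lam i * (1 + lam i / lam (i - 1)) - lam (i + 1) * (lam (i + 1) / lam i)

/-- The normalization `S_k = λ_k (1 + θ_k) + Σ_{i=1}^{k−1} w_i` of Theorem 2. -/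
noncomputable def adgdS (lam : ℕ → ℝ) (k : ℕ) : ℝ :=
  lam k * (1 + lam k / lam (k - 1)) + ∑ i ∈ Finset.Icc 1 (k - 1), adgdW lam i

/-- The ergodic iterate `x̂^k` of Theorem 2. -/
noncomputable def adgdXhat {d : ℕ} (lam : ℕ → ℝ) (x : ℕ → EuclideanSpace ℝ (Fin d))
    (k : ℕ) : EuclideanSpace ℝ (Fin d) :=
  (adgdS lam k)⁻¹ •
    ((lam k * (1 + lam k / lam (k - 1))) • x k + ∑ i ∈ Finset.Icc 1 (k - 1), adgdW lam i • x i)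

/-!
Fix a point `z`. With `F k = f (x k) - f z`, the energy
`‖x (k+1) - z‖² + ½ ‖x (k+1) - x k‖² + 2 λ_{k+1} θ_{k+1} F k`
drops by at least `2 w_{k+1} F (k+1)` in the step from `k` to `k + 1`: the term `λ² ‖∇f(x (k+1))‖²`
that gradient descent produces is absorbed by the curvature condition
`2 λ ‖∇f(x (k+1)) - ∇f(x k)‖ ≤ ‖x (k+1) - x k‖` and by convexity between `x (k+1)` and `x k`.
Summing over the steps and applying Jensen's inequality to the ergodic iterate, whose weights are
nonnegative by the growth condition on the stepsizes, gives the rate.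
-/

section Convexity

variable {E : Type*} [AddCommGroup E] [Module ℝ E] {f : E → ℝ}

theorem convexOn_univ_of_forall_exists_subgradient
    (hf : ∀ z, ∃ φ : E →ₗ[ℝ] ℝ, ∀ y, f z + φ (y - z) ≤ f y) : ConvexOn ℝ Set.univ f := by
  refine ⟨convex_univ, fun x _ y _ a b ha hb hab => ?_⟩
  obtain ⟨φ, hφ⟩ := hf (a • x + b • y)
  set z := a • x + b • y with hz
  have balanced : a * φ (x - z) + b * φ (y - z) = 0 := by
    have hzero : a • (x - z) + b • (y - z) = 0 := by
      rw [smul_sub, smul_sub, sub_add_sub_comm, ← add_smul, hab, one_smul, ← hz, sub_self]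
    simpa only [map_add, map_smul, smul_eq_mul, map_zero] using congrArg φ hzero
  calc
    f z = a * (f z + φ (x - z)) + b * (f z + φ (y - z)) := by
      linear_combination -f z * hab - balanced
    _ ≤ a • f x + b • f y :=
      add_le_add (mul_le_mul_of_nonneg_left (hφ x) ha) (mul_le_mul_of_nonneg_left (hφ y) hb)

theorem sum_weights_mul_map_average_le {ι : Type*} {s : Set E} {t : Finset ι} {v : ℝ} {w : ι → ℝ}
    {q : E} {p : ι → E} (hf : ConvexOn ℝ s f) (hv : 0 ≤ v) (hw : ∀ i ∈ t, 0 ≤ w i)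
    (hpos : 0 < v + ∑ i ∈ t, w i) (hq : q ∈ s) (hp : ∀ i ∈ t, p i ∈ s) :
    (v + ∑ i ∈ t, w i) * f ((v + ∑ i ∈ t, w i)⁻¹ • (v • q + ∑ i ∈ t, w i • p i)) ≤
      v * f q + ∑ i ∈ t, w i * f (p i) := by
  set S := v + ∑ i ∈ t, w i with hS
  have normalized : S⁻¹ * v + ∑ i ∈ t, S⁻¹ * w i = 1 := by
    rw [← Finset.mul_sum, ← mul_add, ← hS, inv_mul_cancel₀ hpos.ne']
  have jensen := hf.map_add_sum_le
    (fun i hi => mul_nonneg (inv_nonneg.2 hpos.le) (hw i hi)) normalized hp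
    (mul_nonneg (inv_nonneg.2 hpos.le) hv) hq
  simp only [mul_smul, ← Finset.smul_sum, ← smul_add] at jensen
  exact (le_inv_mul_iff₀ hpos).1 jensen

end Convexity

section InnerProduct

variable {E : Type*} [NormedAddCommGroup E] [InnerProductSpace ℝ E]

-- The difference of the two sides is `‖g - 2 • h‖ ^ 2`.
theorem three_mul_norm_sq_le (g h : E) : 3 * ‖g‖ ^ 2 ≤ 4 * ‖g - h‖ ^ 2 + 4 * ⟪g, h⟫ := by
  have expand : ‖g - (2 : ℝ) • h‖ ^ 2 = ‖g‖ ^ 2 - 4 * ⟪g, h⟫ + 4 * ‖h‖ ^ 2 := by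
    rw [norm_sub_sq_real, inner_smul_right, norm_smul, mul_pow, Real.norm_eq_abs, sq_abs]
    ring
  linarith [sq_nonneg ‖g - (2 : ℝ) • h‖, norm_sub_sq_real g h]

theorem three_mul_norm_smul_sq_le {g h : E} {l r : ℝ} (hl : 0 ≤ l) (hr : 2 * l * ‖g - h‖ ≤ r) :
    3 * ‖l • g‖ ^ 2 ≤ r ^ 2 + 4 * l ^ 2 * ⟪g, h⟫ := by
  have curvature : (2 * l * ‖g - h‖) ^ 2 ≤ r ^ 2 := by gcongr
  calc
    3 * ‖l • g‖ ^ 2 = l ^ 2 * (3 * ‖g‖ ^ 2) := by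
      rw [norm_smul, mul_pow, Real.norm_eq_abs, sq_abs]
      ring
    _ ≤ l ^ 2 * (4 * ‖g - h‖ ^ 2 + 4 * ⟪g, h⟫) := by
      gcongr
      exact three_mul_norm_sq_le g h
    _ ≤ r ^ 2 + 4 * l ^ 2 * ⟪g, h⟫ := by linarith

end InnerProduct

section Weights

variable {lam : ℕ → ℝ}

theorem adgdS_succ_eq_sum (lam : ℕ → ℝ) (n : ℕ) :
    adgdS lam (n + 1) = (∑ i ∈ Finset.Icc 1 (n + 1), lam i) + lam 1 * (lam 1 / lam 0) := by
  induction n with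
  | zero =>
    simp only [adgdS, zero_add, tsub_self, Finset.Icc_self, Finset.sum_singleton,
      Finset.Icc_eq_empty_of_lt zero_lt_one, Finset.sum_empty]
    ring
  | succ n ih =>
    rw [Finset.sum_Icc_succ_top (by lia)]
    simp only [adgdS, add_tsub_cancel_right] at ih ⊢
    rw [Finset.sum_Icc_succ_top (by lia)]
    simp only [adgdW, add_tsub_cancel_right] at ih ⊢
    linarith

theorem adgdS_succ_pos (hlam : ∀ k, 0 < lam k) (n : ℕ) : 0 < adgdS lam (n + 1) := by
  rw [adgdS_succ_eq_sum]
  have hsum : 0 < ∑ i ∈ Finset.Icc 1 (n + 1), lam i :=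
    Finset.sum_pos (fun i _ => hlam i) ⟨1, by simp⟩
  have := hlam 0
  have := hlam 1
  positivity

theorem adgdW_nonneg {i : ℕ} (hi : 0 < lam i)
    (hgrowth : lam (i + 1) ^ 2 ≤ (1 + lam i / lam (i - 1)) * lam i ^ 2) : 0 ≤ adgdW lam i := by
  rw [adgdW, sub_nonneg, ← mul_div_assoc, div_le_iff₀ hi]
  linarith

end Weights

/-- The ergodic iterate `x̂^k` for sequences in an arbitrary real vector space; in `ℝ^d` it is
`adgdXhat` by definition. -/
noncomputable def ergodicIterate {E : Type*} [AddCommGroup E] [Module ℝ E] (lam : ℕ → ℝ)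
    (x : ℕ → E) (k : ℕ) : E :=
  (adgdS lam k)⁻¹ •
    ((lam k * (1 + lam k / lam (k - 1))) • x k + ∑ i ∈ Finset.Icc 1 (k - 1), adgdW lam i • x i)

theorem adgdS_mul_map_ergodicIterate_sub_le {E : Type*} [AddCommGroup E] [Module ℝ E] {f : E → ℝ}
    (hf : ConvexOn ℝ Set.univ f) {lam : ℕ → ℝ} (hlam : ∀ k, 0 < lam k)
    (hweight : ∀ i, 1 ≤ i → 0 ≤ adgdW lam i) (x : ℕ → E) (c : ℝ) (n : ℕ) :
    adgdS lam (n + 1) * (f (ergodicIterate lam x (n + 1)) - c) ≤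
      lam (n + 1) * (1 + lam (n + 1) / lam n) * (f (x (n + 1)) - c) +
        ∑ i ∈ Finset.Icc 1 n, adgdW lam i * (f (x i) - c) := by
  have hlead : 0 ≤ lam (n + 1) * (1 + lam (n + 1) / lam n) := by
    have := hlam n
    have := hlam (n + 1)
    positivity
  exact sum_weights_mul_map_average_le (hf.add_const (-c)) hlead
    (fun i hi => hweight i (Finset.mem_Icc.1 hi).1) (adgdS_succ_pos hlam n)
    (Set.mem_univ _) fun _ _ => Set.mem_univ _

section Descent

variable {E : Type*} [NormedAddCommGroup E] [InnerProductSpace ℝ E]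

/-- The iteration `x (k+1) = x k - λ_k g (x k)` along a vector field `g`, with positive stepsizes
at most half the inverse of the local Lipschitz estimate of `g` between consecutive iterates. The
bound is multiplied out, so it imposes nothing where `g` takes the same value at both. -/
structure IsCurvatureAdaptedDescent (g : E → E) (x : ℕ → E) (lam : ℕ → ℝ) : Prop where
  stepsize_pos : ∀ k, 0 < lam k
  iterate_succ : ∀ k, x (k + 1) = x k - lam k • g (x k)
  curvature_le : ∀ k, 1 ≤ k → 2 * lam k * ‖g (x k) - g (x (k - 1))‖ ≤ ‖x k - x (k - 1)‖

/-- The Lyapunov function of adaptive gradient descent relative to a comparison point `z`. The index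
is shifted by one with respect to the iterate: the energy at `k` involves `x k` and `x (k + 1)`. -/
noncomputable def descentEnergy (f : E → ℝ) (x : ℕ → E) (lam : ℕ → ℝ) (z : E) (k : ℕ) : ℝ :=
  ‖x (k + 1) - z‖ ^ 2 + (1 / 2) * ‖x (k + 1) - x k‖ ^ 2
    + 2 * lam (k + 1) * (lam (k + 1) / lam k) * (f (x k) - f z)

namespace IsCurvatureAdaptedDescent

variable {f : E → ℝ} {g : E → E} {x : ℕ → E} {lam : ℕ → ℝ}

theorem iterate_succ_sub (hx : IsCurvatureAdaptedDescent g x lam) (k : ℕ) :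
    x (k + 1) - x k = -(lam k • g (x k)) := by
  rw [hx.iterate_succ]
  abel

theorem norm_iterate_succ_sub_sq (hx : IsCurvatureAdaptedDescent g x lam) (z : E) (k : ℕ) :
    ‖x (k + 1) - z‖ ^ 2 =
      ‖x k - z‖ ^ 2 - 2 * lam k * ⟪g (x k), x k - z⟫ + ‖x (k + 1) - x k‖ ^ 2 := by
  rw [← sub_add_sub_cancel' (x k) z (x (k + 1)), norm_add_sq_real, hx.iterate_succ_sub,
    inner_neg_right, inner_smul_right, real_inner_comm]
  ring

theorem three_mul_norm_step_sq_le (hx : IsCurvatureAdaptedDescent g x lam) (k : ℕ) :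
    3 * ‖x (k + 2) - x (k + 1)‖ ^ 2 ≤
      ‖x (k + 1) - x k‖ ^ 2 + 4 * lam (k + 1) ^ 2 * ⟪g (x (k + 1)), g (x k)⟫ := by
  rw [hx.iterate_succ_sub (k + 1), norm_neg]
  exact three_mul_norm_smul_sq_le (hx.stepsize_pos _).le (hx.curvature_le (k + 1) (by lia))

theorem stepsize_mul_inner_le (hx : IsCurvatureAdaptedDescent g x lam)
    (hg : ∀ u v, f u + ⟪g u, v - u⟫ ≤ f v) (k : ℕ) :
    lam k * ⟪g (x (k + 1)), g (x k)⟫ ≤ f (x k) - f (x (k + 1)) := by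
  have hsub := hg (x (k + 1)) (x k)
  rw [← neg_sub, hx.iterate_succ_sub, neg_neg, inner_smul_right] at hsub
  linarith

theorem norm_sq_add_le_descentEnergy (hx : IsCurvatureAdaptedDescent g x lam)
    (hg : ∀ u v, f u + ⟪g u, v - u⟫ ≤ f v) (z : E) (k : ℕ) :
    ‖x (k + 2) - z‖ ^ 2 + (1 / 2) * ‖x (k + 2) - x (k + 1)‖ ^ 2
      + 2 * (lam (k + 1) * (1 + lam (k + 1) / lam k)) * (f (x (k + 1)) - f z)
      ≤ descentEnergy f x lam z k := by
  have hk := hx.stepsize_pos k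
  have hk1 := hx.stepsize_pos (k + 1)
  have distance := hx.norm_iterate_succ_sub_sq z (k + 1)
  have gap_le_inner : lam (k + 1) * (f (x (k + 1)) - f z) ≤
      lam (k + 1) * ⟪g (x (k + 1)), x (k + 1) - z⟫ := by
    have hsub := hg (x (k + 1)) z
    rw [← neg_sub, inner_neg_right] at hsub
    gcongr
    linarith
  have inner_le_decrease : lam (k + 1) ^ 2 * ⟪g (x (k + 1)), g (x k)⟫ ≤
      lam (k + 1) * (lam (k + 1) / lam k) * (f (x k) - f (x (k + 1))) := by
    calc
      lam (k + 1) ^ 2 * ⟪g (x (k + 1)), g (x k)⟫ =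
          lam (k + 1) * (lam (k + 1) / lam k) * (lam k * ⟪g (x (k + 1)), g (x k)⟫) := by
        field_simp
      _ ≤ _ := by
        gcongr
        exact hx.stepsize_mul_inner_le hg k
  have step := hx.three_mul_norm_step_sq_le k
  rw [descentEnergy]
  linarith

theorem descentEnergy_succ_add_le (hx : IsCurvatureAdaptedDescent g x lam)
    (hg : ∀ u v, f u + ⟪g u, v - u⟫ ≤ f v) (z : E) (k : ℕ) :
    descentEnergy f x lam z (k + 1) + 2 * (adgdW lam (k + 1) * (f (x (k + 1)) - f z))
      ≤ descentEnergy f x lam z k := by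
  refine le_trans (le_of_eq ?_) (hx.norm_sq_add_le_descentEnergy hg z k)
  simp only [descentEnergy, adgdW, add_tsub_cancel_right]
  ring

theorem descentEnergy_add_sum_le (hx : IsCurvatureAdaptedDescent g x lam)
    (hg : ∀ u v, f u + ⟪g u, v - u⟫ ≤ f v) (z : E) (n : ℕ) :
    descentEnergy f x lam z n + 2 * ∑ i ∈ Finset.Icc 1 n, adgdW lam i * (f (x i) - f z)
      ≤ descentEnergy f x lam z 0 := by
  induction n with
  | zero => simp
  | succ n ih =>
    rw [Finset.sum_Icc_succ_top (by lia)]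
    linarith [hx.descentEnergy_succ_add_le hg z n]

theorem weighted_gaps_le_descentEnergy (hx : IsCurvatureAdaptedDescent g x lam)
    (hg : ∀ u v, f u + ⟪g u, v - u⟫ ≤ f v) (z : E) (n : ℕ) :
    2 * (lam (n + 1) * (1 + lam (n + 1) / lam n) * (f (x (n + 1)) - f z)
      + ∑ i ∈ Finset.Icc 1 n, adgdW lam i * (f (x i) - f z)) ≤ descentEnergy f x lam z 0 := by
  linarith [hx.norm_sq_add_le_descentEnergy hg z n, hx.descentEnergy_add_sum_le hg z n,
    sq_nonneg ‖x (n + 2) - z‖, sq_nonneg ‖x (n + 2) - x (n + 1)‖]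

end IsCurvatureAdaptedDescent

theorem adgd_ergodic_rate_general {f : E → ℝ} {g : E → E} {x : ℕ → E} {lam : ℕ → ℝ}
    (hg : ∀ u v, f u + ⟪g u, v - u⟫ ≤ f v) (hx : IsCurvatureAdaptedDescent g x lam)
    (hgrowth : ∀ k, 1 ≤ k → lam (k + 1) ^ 2 ≤ (1 + lam k / lam (k - 1)) * lam k ^ 2)
    (z : E) (k : ℕ) (hk : 1 ≤ k) :
    adgdS lam k = (∑ i ∈ Finset.Icc 1 k, lam i) + lam 1 * (lam 1 / lam 0) ∧
      f (ergodicIterate lam x k) - f z ≤ descentEnergy f x lam z 0 / (2 * adgdS lam k) := by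
  obtain ⟨n, rfl⟩ := Nat.exists_eq_add_of_le' hk
  refine ⟨adgdS_succ_eq_sum lam n, ?_⟩
  have hconvex : ConvexOn ℝ Set.univ f :=
    convexOn_univ_of_forall_exists_subgradient fun u => ⟨innerₗ E (g u), hg u⟩
  have hweight (i : ℕ) (hi : 1 ≤ i) : 0 ≤ adgdW lam i :=
    adgdW_nonneg (hx.stepsize_pos i) (hgrowth i hi)
  have jensen := adgdS_mul_map_ergodicIterate_sub_le hconvex hx.stepsize_pos hweight x (f z) n
  have hS := adgdS_succ_pos hx.stepsize_pos n
  rw [le_div_iff₀ (by positivity)]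
  linarith [hx.weighted_gaps_le_descentEnergy hg z n]

end Descent

/-- Theorem 2 (complexity part) of "Adaptive gradient descent without descent":
`S_k = Σ_{i=1}^k λ_i + λ₁θ₁` and `f(x̂^k) − f* ≤ D / (2 S_k)`. -/
theorem adgd_ergodic_rate {d : ℕ}
    (f : EuclideanSpace ℝ (Fin d) → ℝ)
    (f' : EuclideanSpace ℝ (Fin d) → EuclideanSpace ℝ (Fin d))
    (hdiff : ∀ x, HasGradientAt f (f' x) x)
    (hconv : ∀ x y, f x + ⟪f' x, y - x⟫ ≤ f y)
    (xstar : EuclideanSpace ℝ (Fin d))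
    (hmin : ∀ y, f xstar ≤ f y)
    (x : ℕ → EuclideanSpace ℝ (Fin d)) (lam : ℕ → ℝ)
    (hlam : ∀ k, 0 < lam k)
    (hupd : ∀ k, x (k + 1) = x k - lam k • f' (x k))
    (hstep1 : ∀ k, 1 ≤ k → 2 * lam k * ‖f' (x k) - f' (x (k - 1))‖ ≤ ‖x k - x (k - 1)‖)
    (hstep2 : ∀ k, 1 ≤ k → lam (k + 1) ^ 2 ≤ (1 + lam k / lam (k - 1)) * lam k ^ 2) :
    ∀ k, 1 ≤ k →
      adgdS lam k = (∑ i ∈ Finset.Icc 1 k, lam i) + lam 1 * (lam 1 / lam 0) ∧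
      f (adgdXhat lam x k) - f xstar ≤
        (‖x 1 - xstar‖ ^ 2 + (1 / 2) * ‖x 1 - x 0‖ ^ 2
            + 2 * lam 1 * (lam 1 / lam 0) * (f (x 0) - f xstar)) / (2 * adgdS lam k) := by
  exact adgd_ergodic_rate_general hconv ⟨hlam, hupd, hstep1⟩ hstep2 xstar
end

section
/- Let f : ℝ^d → ℝ be differentiable, let C ⊆ ℝ^d, and let L > 0 be such that ‖∇f(x) − ∇f(y)‖ ≤ L‖x − y‖ for all x, y ∈ C. Let (x^k)_{k≥0} ⊆ C and (λ_k)_{k≥0} satisfy: λ₀ > 0; x^{k+1} = x^k − λ_k∇f(x^k) for all k ≥ 0; ∇f(x¹) ≠ ∇f(x⁰) and λ₁ = ‖x¹ − x⁰‖/(2‖∇f(x¹) − ∇f(x⁰)‖); and for every k ≥ 2, λ_k = min{√(1+θ_{k−1})·λ_{k−1}, ‖x^k − x^{k−1}‖/(2‖∇f(x^k) − ∇f(x^{k−1})‖)} when ∇f(x^k) ≠ ∇f(x^{k−1}), and λ_k = √(1+θ_{k−1})·λ_{k−1} otherwise, where θ_k = λ_k/λ_{k−1}. Then λ_k ≥ 1/(2L)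 for every k ≥ 1. -/
open scoped RealInnerProductSpace

/-!
The Lipschitz bound makes every secant stepsize `‖Δx‖ / (2 * ‖Δg‖)` at least `1 / (2 * L)`, while
the other candidate stepsize multiplies the previous one by `√(1 + θ) ≥ 1`. Hence the bound
`1 / (2 * L)`, which holds at index `1`, is never lost by taking the minimum of the two.
-/

section Secant

variable {E G : Type*} [SeminormedAddGroup E] [NormedAddGroup G] {u : E} {v : G} {L : ℝ}

lemma pos_of_norm_le_mul_norm (hv : v ≠ 0) (hvu : ‖v‖ ≤ L * ‖u‖) : 0 < L :=
  pos_of_mul_pos_left ((norm_pos_iff.mpr hv).trans_le hvu) (norm_nonneg u)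

lemma one_div_two_mul_le_norm_div_two_mul_norm (hv : v ≠ 0) (hvu : ‖v‖ ≤ L * ‖u‖) :
    1 / (2 * L) ≤ ‖u‖ / (2 * ‖v‖) := by
  have hL : 0 < L := pos_of_norm_le_mul_norm hv hvu
  rw [div_le_div_iff₀ (by positivity) (by positivity)]
  linarith

end Secant

lemma le_sqrt_one_add_div_mul {a b : ℝ} (ha : 0 ≤ a) (hb : 0 ≤ b) : b ≤ √(1 + b / a) * b :=
  le_mul_of_one_le_left hb <|
    Real.one_le_sqrt.mpr <| le_add_of_nonneg_right <| div_nonneg hb ha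

lemma le_succ_of_min_sqrt_mul_le {lam : ℕ → ℝ} {c : ℝ} (hc : 0 ≤ c) (h0 : 0 ≤ lam 0)
    (h1 : c ≤ lam 1)
    (hstep : ∀ k, min (√(1 + lam (k + 1) / lam k) * lam (k + 1)) c ≤ lam (k + 2)) (k : ℕ) :
    c ≤ lam (k + 1) := by
  suffices h : 0 ≤ lam k ∧ c ≤ lam (k + 1) from h.2
  induction k with
  | zero => exact ⟨h0, h1⟩
  | succ k ih =>
    obtain ⟨hk, hk_succ⟩ := ih
    have hk_succ_nonneg : 0 ≤ lam (k + 1) := hc.trans hk_succ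
    have hgrowth : c ≤ √(1 + lam (k + 1) / lam k) * lam (k + 1) :=
      hk_succ.trans (le_sqrt_one_add_div_mul hk hk_succ_nonneg)
    exact ⟨hk_succ_nonneg, (le_min hgrowth le_rfl).trans (hstep k)⟩

/-- The sequence `g` stands for the gradients `∇f (x k)`. -/
theorem adgd_stepsize_lower_bound_general {E G : Type*} [SeminormedAddGroup E] [NormedAddGroup G]
    {x : ℕ → E} {g : ℕ → G} {L : ℝ} {lam : ℕ → ℝ}
    (hLip : ∀ k, ‖g (k + 1) - g k‖ ≤ L * ‖x (k + 1) - x k‖)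
    (hl0 : 0 < lam 0) (hne1 : g 1 ≠ g 0)
    (hl1 : lam 1 = ‖x 1 - x 0‖ / (2 * ‖g 1 - g 0‖))
    (hrec : ∀ k,
      (g (k + 2) ≠ g (k + 1) →
        lam (k + 2) = min (√(1 + lam (k + 1) / lam k) * lam (k + 1))
          (‖x (k + 2) - x (k + 1)‖ / (2 * ‖g (k + 2) - g (k + 1)‖))) ∧
      (g (k + 2) = g (k + 1) → lam (k + 2) = √(1 + lam (k + 1) / lam k) * lam (k + 1)))
    (k : ℕ) : 1 / (2 * L) ≤ lam (k + 1) := by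
  have hL : 0 < L := pos_of_norm_le_mul_norm (sub_ne_zero.mpr hne1) (hLip 0)
  have hsecant (k : ℕ) (hne : g (k + 1) ≠ g k) :
      1 / (2 * L) ≤ ‖x (k + 1) - x k‖ / (2 * ‖g (k + 1) - g k‖) :=
    one_div_two_mul_le_norm_div_two_mul_norm (sub_ne_zero.mpr hne) (hLip k)
  refine le_succ_of_min_sqrt_mul_le (by positivity) hl0.le ((hsecant 0 hne1).trans_eq hl1.symm)
    (fun k ↦ ?_) k
  by_cases hg : g (k + 2) = g (k + 1)
  · exact (min_le_left _ _).trans_eq ((hrec k).2 hg).symm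
  · exact (min_le_min_left _ (hsecant (k + 1) hg)).trans_eq ((hrec k).1 hg).symm

/-- Lower bound `λ_k ≥ 1/(2L)` for the stepsizes of adaptive gradient descent,
when the iterates stay in a set `C` on which `∇f` is `L`-Lipschitz. -/
theorem adgd_stepsize_lower_bound {d : ℕ}
    (f : EuclideanSpace ℝ (Fin d) → ℝ)
    (f' : EuclideanSpace ℝ (Fin d) → EuclideanSpace ℝ (Fin d))
    (hdiff : ∀ x, HasGradientAt f (f' x) x)
    (C : Set (EuclideanSpace ℝ (Fin d))) (L : ℝ) (hL : 0 < L)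
    (hLip : ∀ x ∈ C, ∀ y ∈ C, ‖f' x - f' y‖ ≤ L * ‖x - y‖)
    (x : ℕ → EuclideanSpace ℝ (Fin d)) (hxC : ∀ k, x k ∈ C)
    (lam : ℕ → ℝ) (hl0 : 0 < lam 0)
    (hupd : ∀ k, x (k + 1) = x k - lam k • f' (x k))
    (hne1 : f' (x 1) ≠ f' (x 0))
    (hl1 : lam 1 = ‖x 1 - x 0‖ / (2 * ‖f' (x 1) - f' (x 0)‖))
    (hrec : ∀ k, 2 ≤ k →
      (f' (x k) ≠ f' (x (k - 1)) →
        lam k = min (Real.sqrt (1 + lam (k - 1) / lam (k - 2)) * lam (k - 1))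
          (‖x k - x (k - 1)‖ / (2 * ‖f' (x k) - f' (x (k - 1))‖))) ∧
      (f' (x k) = f' (x (k - 1)) →
        lam k = Real.sqrt (1 + lam (k - 1) / lam (k - 2)) * lam (k - 1))) :
    ∀ k, 1 ≤ k → 1 / (2 * L) ≤ lam k := by
  intro k hk
  obtain ⟨j, rfl⟩ := Nat.exists_eq_add_of_le' hk
  exact adgd_stepsize_lower_bound_general (g := fun i ↦ f' (x i))
    (fun i ↦ hLip _ (hxC (i + 1)) _ (hxC i)) hl0 hne1 hl1 (fun i ↦ hrec (i + 2) (by lia)) j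
end

section
/- Let f : ℝ^d → ℝ be differentiable, let 0 < μ ≤ L, let C ⊆ ℝ^d be convex, and suppose f is μ-strongly convex on C and ∇f is L-Lipschitz on C. Let x* ∈ C be a minimizer of f over ℝ^d with f* = f(x*). Let x^{k−1}, x^k, x^{k+1} ∈ C and λ_{k−2}, λ_{k−1}, λ_k > 0, and set θ_{k−1} = λ_{k−1}/λ_{k−2} and θ_k = λ_k/λ_{k−1}. Suppose x^k = x^{k−1} − λ_{k−1}∇f(x^{k−1}), x^{k+1} = x^k − λ_k∇f(x^k), 2λ_k‖∇f(x^k) − ∇f(x^{k−1})‖ ≤ ‖x^k − x^{k−1}‖, λ_k² ≤ (1 + θ_{k−1}/2)·λ_{k−1}², and λ_k ≤ 1/(2μ). Then ‖x^{k+1} − x*‖² + (1/2)(1 + 2μ/L)‖x^{k+1} − x^k‖² + 2λ_k(1+θ_k)(f(x^k) − f*) ≤ (1 − λ_kμ/2)‖x^k − x*‖² + (1/2)‖x^k − x^{k−1}‖² + 2λ_{k−1}(1 + θ_{k−1}/2)(f(x^{k−1}) − f*). -/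
open scoped RealInnerProductSpace

/-!
Write `x₀, x₁, x₂` for `x^{k-1}, x^k, x^{k+1}`, `γ₀, γ₁` for the step sizes `λ_{k-1}, λ_k`, `g₀, g₁`
for the gradients at `x₀, x₁`, and `z` for the minimizer. Strong convexity between `x₁` and `z`
bounds `‖x₂ - z‖²` by `(1 - γ₁ μ) ‖x₁ - z‖² - 2 γ₁ (f x₁ - f z) + ‖γ₁ g₁‖²`, so that, counting the
term `½ (1 + 2 μ / L) ‖x₂ - x₁‖²`, one has to absorb `(3/2 + μ / L) ‖γ₁ g₁‖²`.

* `2 ‖γ₁ g₁‖²` is at most `½ ‖x₁ - x₀‖² + 2 (γ₁² / γ₀) (f x₀ - f x₁)`. Since `x₁ - x₀ = -γ₀ g₀`,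
  monotonicity of the gradient reads `⟪g₁, g₀⟫ ≤ ‖g₀‖²`, hence `‖g₁‖² ≤ ‖g₁ - g₀‖² + ⟪g₁, g₀⟫`. The
  first summand is controlled by the step size rule, the second by convexity between `x₁` and `x₀`.
  The growth condition on `γ₁` then bounds `γ₁² / γ₀` in front of `f x₀ - f z`.
* The remaining `(μ / L - ½) ‖γ₁ g₁‖²` is at most half of the contraction `γ₁ μ ‖x₁ - z‖²`, because
  `μ / L - ½ ≤ ½ (μ / L)²`, `‖g₁‖ ≤ L ‖x₁ - z‖` and `γ₁ μ ≤ 1`.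
-/

section InnerProductSpace

variable {E : Type*} [NormedAddCommGroup E] [InnerProductSpace ℝ E]

theorem inner_sub_nonneg_of_subgradient_ineq {f : E → ℝ} {x y g h : E}
    (hxy : f x + ⟪g, y - x⟫ ≤ f y) (hyx : f y + ⟪h, x - y⟫ ≤ f x) : 0 ≤ ⟪g - h, x - y⟫ := by
  rw [← neg_sub x y, inner_neg_right] at hxy
  rw [inner_sub_left]
  linarith

theorem inner_le_norm_sq_of_inner_sub_smul_nonneg {γ : ℝ} (hγ : 0 < γ) {g h : E}
    (hmono : 0 ≤ ⟪g - h, -(γ • h)⟫) : ⟪g, h⟫ ≤ ‖h‖ ^ 2 := by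
  rw [inner_neg_right, inner_smul_right, inner_sub_left, real_inner_self_eq_norm_sq, ← mul_neg,
    mul_nonneg_iff_of_pos_left hγ] at hmono
  linarith

theorem norm_sq_le_norm_sub_sq_add_inner {g h : E} (hgh : ⟪g, h⟫ ≤ ‖h‖ ^ 2) :
    ‖g‖ ^ 2 ≤ ‖g - h‖ ^ 2 + ⟪g, h⟫ := by
  rw [norm_sub_sq_real]
  linarith

theorem norm_sub_smul_sub_sq_le_of_strong_subgradient_ineq {f : E → ℝ} {x z g : E} {μ γ : ℝ}
    (hγ : 0 ≤ γ) (hxz : f x + ⟪g, z - x⟫ + μ / 2 * ‖z - x‖ ^ 2 ≤ f z) :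
    ‖x - γ • g - z‖ ^ 2 ≤
      (1 - γ * μ) * ‖x - z‖ ^ 2 - 2 * γ * (f x - f z) + ‖γ • g‖ ^ 2 := by
  have expand : ‖x - γ • g - z‖ ^ 2 = ‖x - z‖ ^ 2 - 2 * γ * ⟪g, x - z⟫ + ‖γ • g‖ ^ 2 := by
    rw [sub_right_comm, norm_sub_sq_real, inner_smul_right, real_inner_comm, mul_assoc]
  rw [← neg_sub x z, inner_neg_right, norm_neg] at hxz
  have scaled := mul_le_mul_of_nonneg_left hxz (mul_nonneg zero_le_two hγ)
  linarith

theorem norm_smul_sq_le_of_adaptive_step {f : E → ℝ} {x₀ x₁ g₀ g₁ : E} {γ₀ γ₁ : ℝ}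
    (hγ₀ : 0 < γ₀) (hγ₁ : 0 ≤ γ₁) (hx₁ : x₁ = x₀ - γ₀ • g₀)
    (h₀₁ : f x₀ + ⟪g₀, x₁ - x₀⟫ ≤ f x₁) (h₁₀ : f x₁ + ⟪g₁, x₀ - x₁⟫ ≤ f x₀)
    (hstep : 2 * γ₁ * ‖g₁ - g₀‖ ≤ ‖x₁ - x₀‖) :
    ‖γ₁ • g₁‖ ^ 2 ≤ 1 / 4 * ‖x₁ - x₀‖ ^ 2 + γ₁ * (γ₁ / γ₀) * (f x₀ - f x₁) := by
  have displacement : x₁ - x₀ = -(γ₀ • g₀) := by rw [hx₁]; abel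
  have inner_le : ⟪g₁, g₀⟫ ≤ ‖g₀‖ ^ 2 :=
    inner_le_norm_sq_of_inner_sub_smul_nonneg hγ₀
      (displacement ▸ inner_sub_nonneg_of_subgradient_ineq h₁₀ h₀₁)
  have descent : γ₀ * ⟪g₁, g₀⟫ ≤ f x₀ - f x₁ := by
    rw [← neg_sub x₁ x₀, displacement, neg_neg, inner_smul_right] at h₁₀
    linarith
  have variation : (2 * γ₁ * ‖g₁ - g₀‖) ^ 2 ≤ ‖x₁ - x₀‖ ^ 2 := by gcongr
  calc ‖γ₁ • g₁‖ ^ 2 = γ₁ ^ 2 * ‖g₁‖ ^ 2 := by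
        rw [norm_smul, mul_pow, Real.norm_eq_abs, sq_abs]
    _ ≤ γ₁ ^ 2 * (‖g₁ - g₀‖ ^ 2 + ⟪g₁, g₀⟫) := by
        gcongr
        exact norm_sq_le_norm_sub_sq_add_inner inner_le
    _ = 1 / 4 * (2 * γ₁ * ‖g₁ - g₀‖) ^ 2 + γ₁ * (γ₁ / γ₀) * (γ₀ * ⟪g₁, g₀⟫) := by
        field_simp
        ring
    _ ≤ 1 / 4 * ‖x₁ - x₀‖ ^ 2 + γ₁ * (γ₁ / γ₀) * (f x₀ - f x₁) := by gcongr

theorem div_mul_norm_smul_sq_le {g : E} {μ L γ r : ℝ} (hμ : 0 ≤ μ) (hL : 0 < L) (hγ : 0 ≤ γ)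
    (hγμ : γ * μ ≤ 1) (hg : ‖g‖ ≤ L * r) :
    μ / L * ‖γ • g‖ ^ 2 ≤ 1 / 2 * ‖γ • g‖ ^ 2 + γ * μ / 2 * r ^ 2 := by
  have young : μ / L ≤ 1 / 2 + 1 / 2 * (μ / L) ^ 2 := by
    linarith [two_mul_le_add_sq (μ / L) 1]
  have curvature : (μ / L) ^ 2 * ‖γ • g‖ ^ 2 ≤ γ * μ * r ^ 2 := calc
    (μ / L) ^ 2 * ‖γ • g‖ ^ 2 = (μ / L) ^ 2 * (γ * ‖g‖) ^ 2 := by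
      rw [norm_smul_of_nonneg hγ]
    _ ≤ (μ / L) ^ 2 * (γ * (L * r)) ^ 2 := by gcongr
    _ = (γ * μ) ^ 2 * r ^ 2 := by field_simp
    _ ≤ γ * μ * r ^ 2 := by
      gcongr
      exact pow_le_of_le_one (by positivity) hγμ two_ne_zero
  calc μ / L * ‖γ • g‖ ^ 2 ≤ (1 / 2 + 1 / 2 * (μ / L) ^ 2) * ‖γ • g‖ ^ 2 := by gcongr
    _ = 1 / 2 * ‖γ • g‖ ^ 2 + 1 / 2 * ((μ / L) ^ 2 * ‖γ • g‖ ^ 2) := by ring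
    _ ≤ 1 / 2 * ‖γ • g‖ ^ 2 + γ * μ / 2 * r ^ 2 := by linarith

end InnerProductSpace

section Hilbert

variable {E : Type*} [NormedAddCommGroup E] [InnerProductSpace ℝ E] [CompleteSpace E]

theorem gradient_eq_zero_of_isLocalMin {f : E → ℝ} {g x : E} (hx : IsLocalMin f x)
    (hg : HasGradientAt f g x) : g = 0 :=
  (LinearIsometryEquiv.map_eq_zero_iff _).mp (hx.hasFDerivAt_eq_zero hg.hasFDerivAt)

theorem adgd_strongly_convex_step_general {f : E → ℝ} {f' : E → E} {C : Set E} {μ L : ℝ}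
    (hf' : ∀ x ∈ C, HasGradientAt f (f' x) x) (hμ : 0 ≤ μ) (hL : 0 < L)
    (hsc : ∀ x ∈ C, ∀ y ∈ C, f x + ⟪f' x, y - x⟫ + μ / 2 * ‖y - x‖ ^ 2 ≤ f y)
    (hLip : ∀ x ∈ C, ∀ y ∈ C, ‖f' x - f' y‖ ≤ L * ‖x - y‖)
    {z x₀ x₁ x₂ : E} (hzC : z ∈ C) (hz : ∀ y, f z ≤ f y) (hx₀C : x₀ ∈ C) (hx₁C : x₁ ∈ C)
    {γ₀ γ₁ θ : ℝ} (hγ₀ : 0 < γ₀) (hγ₁ : 0 ≤ γ₁)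
    (hx₁ : x₁ = x₀ - γ₀ • f' x₀) (hx₂ : x₂ = x₁ - γ₁ • f' x₁)
    (hstep : 2 * γ₁ * ‖f' x₁ - f' x₀‖ ≤ ‖x₁ - x₀‖)
    (hgrowth : γ₁ ^ 2 ≤ (1 + θ / 2) * γ₀ ^ 2) (hγ₁μ : γ₁ * μ ≤ 1) :
    ‖x₂ - z‖ ^ 2 + 1 / 2 * (1 + 2 * μ / L) * ‖x₂ - x₁‖ ^ 2
        + 2 * γ₁ * (1 + γ₁ / γ₀) * (f x₁ - f z)
      ≤ (1 - γ₁ * μ / 2) * ‖x₁ - z‖ ^ 2 + 1 / 2 * ‖x₁ - x₀‖ ^ 2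
        + 2 * γ₀ * (1 + θ / 2) * (f x₀ - f z) := by
  have subgradient_ineq : ∀ x ∈ C, ∀ y ∈ C, f x + ⟪f' x, y - x⟫ ≤ f y := fun x hx y hy ↦
    (le_add_of_nonneg_right (by positivity)).trans (hsc x hx y hy)
  have contraction := norm_sub_smul_sub_sq_le_of_strong_subgradient_ineq hγ₁ (hsc x₁ hx₁C z hzC)
  have gradient_bound := norm_smul_sq_le_of_adaptive_step hγ₀ hγ₁ hx₁
    (subgradient_ineq x₀ hx₀C x₁ hx₁C) (subgradient_ineq x₁ hx₁C x₀ hx₀C) hstep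
  have gradient_le : ‖f' x₁‖ ≤ L * ‖x₁ - z‖ := by
    simpa only [gradient_eq_zero_of_isLocalMin (.of_forall hz) (hf' z hzC), sub_zero]
      using hLip x₁ hx₁C z hzC
  have curvature := div_mul_norm_smul_sq_le hμ hL hγ₁ hγ₁μ gradient_le
  have growth : γ₁ * (γ₁ / γ₀) * (f x₀ - f z) ≤ γ₀ * (1 + θ / 2) * (f x₀ - f z) := by
    refine mul_le_mul_of_nonneg_right ?_ (sub_nonneg.mpr (hz x₀))
    rw [← mul_div_assoc, div_le_iff₀ hγ₀]
    linarith
  have hx₂x₁ : ‖x₂ - x₁‖ = ‖γ₁ • f' x₁‖ := by rw [hx₂, sub_sub_cancel_left, norm_neg]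
  rw [hx₂x₁, mul_div_assoc, hx₂]
  linarith

end Hilbert

/-- One-step strengthened energy inequality (inequality (18)) for adaptive gradient descent
under local strong convexity and local smoothness on a convex set `C`. -/
theorem adgd_strongly_convex_step {d : ℕ}
    (f : EuclideanSpace ℝ (Fin d) → ℝ)
    (f' : EuclideanSpace ℝ (Fin d) → EuclideanSpace ℝ (Fin d))
    (hdiff : ∀ x, HasGradientAt f (f' x) x)
    (mu L : ℝ) (hmu : 0 < mu) (hmuL : mu ≤ L)
    (C : Set (EuclideanSpace ℝ (Fin d))) (hC : Convex ℝ C)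
    (hsc : ∀ x ∈ C, ∀ y ∈ C, f x + ⟪f' x, y - x⟫ + mu / 2 * ‖y - x‖ ^ 2 ≤ f y)
    (hLip : ∀ x ∈ C, ∀ y ∈ C, ‖f' x - f' y‖ ≤ L * ‖x - y‖)
    (xstar : EuclideanSpace ℝ (Fin d)) (hxstarC : xstar ∈ C)
    (hmin : ∀ y, f xstar ≤ f y)
    (xkm1 xk xk1 : EuclideanSpace ℝ (Fin d))
    (hxkm1C : xkm1 ∈ C) (hxkC : xk ∈ C) (hxk1C : xk1 ∈ C)
    (lkm2 lkm1 lk : ℝ) (hlkm2 : 0 < lkm2) (hlkm1 : 0 < lkm1) (hlk : 0 < lk)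
    (hxk : xk = xkm1 - lkm1 • f' xkm1)
    (hxk1 : xk1 = xk - lk • f' xk)
    (hstep1 : 2 * lk * ‖f' xk - f' xkm1‖ ≤ ‖xk - xkm1‖)
    (hstep2 : lk ^ 2 ≤ (1 + (lkm1 / lkm2) / 2) * lkm1 ^ 2)
    (hlkmu : lk ≤ 1 / (2 * mu)) :
    ‖xk1 - xstar‖ ^ 2 + (1 / 2) * (1 + 2 * mu / L) * ‖xk1 - xk‖ ^ 2
        + 2 * lk * (1 + lk / lkm1) * (f xk - f xstar)
    ≤ (1 - lk * mu / 2) * ‖xk - xstar‖ ^ 2 + (1 / 2) * ‖xk - xkm1‖ ^ 2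
        + 2 * lkm1 * (1 + (lkm1 / lkm2) / 2) * (f xkm1 - f xstar) := by
  have hlkmu' : lk * mu ≤ 1 := by linarith [(le_div_iff₀ (by positivity)).mp hlkmu]
  exact adgd_strongly_convex_step_general (fun x _ ↦ hdiff x) hmu.le (hmu.trans_le hmuL) hsc hLip
    hxstarC hmin hxkm1C hxkC hlkm1 hlk.le hxk hxk1 hstep1 hstep2 hlkmu'
end

section
/- Let α ∈ (0, 1/2] and β = 1/(2(1−α)). Let f : ℝ^d → ℝ be differentiable, let C ⊆ ℝ^d, and let L > 0 be such that ‖∇f(x) − ∇f(y)‖ ≤ L‖x − y‖ for all x, y ∈ C. Let (x^k)_{k≥0} ⊆ C and (λ_k) satisfy λ₀ > 0, x^{k+1} = x^k − λ_k∇f(x^k) for all k ≥ 0, ∇f(x¹) ≠ ∇f(x⁰) with λ₁ = α‖x¹ − x⁰‖/‖∇f(x¹) − ∇f(x⁰)‖, and for k ≥ 2, λ_k = min{√(1/β + θ_{k−1})·λ_{k−1}, α‖x^k − x^{k−1}‖/‖∇f(x^k) − ∇f(x^{k−1})‖} when ∇f(x^k) ≠ ∇f(x^{k−1}) and λ_k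 = √(1/β + θ_{k−1})·λ_{k−1} otherwise, where θ_k = λ_k/λ_{k−1}. Then λ_k ≥ α/L for all k ≥ 1. -/
open scoped RealInnerProductSpace

/-!
Since `α‖u - v‖ / ‖∇f u - ∇f v‖ ≥ α / L` on `C`, the local curvature estimate never pushes a
stepsize below `α / L`. The other candidate multiplies the previous stepsize by `√(1/β + θ)`, and
`α ≤ 1/2` means exactly `1/β = 2(1 - α) ≥ 1`, so this factor is at least one because `θ ≥ 0`. Hence
the bound propagates from each stepsize to the next.
-/

theorem div_le_mul_div_of_le_mul {α L r s : ℝ} (hα : 0 ≤ α) (hL : 0 < L) (hs : 0 < s)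
    (h : s ≤ L * r) : α / L ≤ α * r / s := by
  rw [div_le_div_iff₀ hL hs]
  calc α * s ≤ α * (L * r) := mul_le_mul_of_nonneg_left h hα
    _ = α * r * L := by ring

theorem le_sqrt_add_div_mul {b s t : ℝ} (hb : 1 ≤ b) (hs : 0 ≤ s) (ht : 0 ≤ t) :
    t ≤ √(b + t / s) * t :=
  le_mul_of_one_le_left ht <|
    Real.one_le_sqrt.mpr <| le_add_of_le_of_nonneg hb (div_nonneg ht hs)

theorem le_succ_of_min_sqrt_add_div_mul_le {b c : ℝ} (hb : 1 ≤ b) (hc : 0 ≤ c) {lam : ℕ → ℝ}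
    (h0 : 0 ≤ lam 0) (h1 : c ≤ lam 1)
    (hstep : ∀ k, min (√(b + lam (k + 1) / lam k) * lam (k + 1)) c ≤ lam (k + 2)) (k : ℕ) :
    c ≤ lam (k + 1) := by
  suffices h : 0 ≤ lam k ∧ c ≤ lam (k + 1) from h.2
  induction k with
  | zero => exact ⟨h0, h1⟩
  | succ k ih =>
    obtain ⟨hprev, hcur⟩ := ih
    have hcur_nonneg : 0 ≤ lam (k + 1) := hc.trans hcur
    have hgrowth : c ≤ √(b + lam (k + 1) / lam k) * lam (k + 1) :=
      hcur.trans (le_sqrt_add_div_mul hb hprev hcur_nonneg)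
    exact ⟨hcur_nonneg, (le_min hgrowth le_rfl).trans (hstep k)⟩

theorem adgd_general_stepsize_lower_bound_small_alpha_general {E F : Type*}
    [SeminormedAddCommGroup E] [NormedAddCommGroup F]
    {alpha beta : ℝ} (halpha : 0 < alpha) (hbeta0 : 0 < beta) (hbeta1 : beta ≤ 1)
    {g : E → F} {C : Set E} {L : ℝ} (hL : 0 < L)
    (hLip : ∀ x ∈ C, ∀ y ∈ C, ‖g x - g y‖ ≤ L * ‖x - y‖)
    {x : ℕ → E} (hxC : ∀ k, x k ∈ C) {lam : ℕ → ℝ} (hl0 : 0 < lam 0)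
    (hne1 : g (x 1) ≠ g (x 0))
    (hl1 : lam 1 = alpha * ‖x 1 - x 0‖ / ‖g (x 1) - g (x 0)‖)
    (hrec : ∀ k, 2 ≤ k →
      (g (x k) ≠ g (x (k - 1)) →
        lam k = min (√(1 / beta + lam (k - 1) / lam (k - 2)) * lam (k - 1))
          (alpha * ‖x k - x (k - 1)‖ / ‖g (x k) - g (x (k - 1))‖)) ∧
      (g (x k) = g (x (k - 1)) →
        lam k = √(1 / beta + lam (k - 1) / lam (k - 2)) * lam (k - 1))) :
    ∀ k, 1 ≤ k → alpha / L ≤ lam k := by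
  have hcurvature (m n : ℕ) (hne : g (x m) ≠ g (x n)) :
      alpha / L ≤ alpha * ‖x m - x n‖ / ‖g (x m) - g (x n)‖ :=
    div_le_mul_div_of_le_mul halpha.le hL (norm_sub_pos_iff.mpr hne)
      (hLip _ (hxC m) _ (hxC n))
  have hfirst : alpha / L ≤ lam 1 := hl1 ▸ hcurvature 1 0 hne1
  have hstep (k : ℕ) :
      min (√(1 / beta + lam (k + 1) / lam k) * lam (k + 1)) (alpha / L) ≤ lam (k + 2) := by
    obtain ⟨hrec_ne, hrec_eq⟩ := hrec (k + 2) (Nat.le_add_left 2 k)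
    by_cases heq : g (x (k + 2)) = g (x (k + 1))
    · exact (min_le_left _ _).trans_eq (hrec_eq heq).symm
    · exact (min_le_min_left _ (hcurvature _ _ heq)).trans_eq (hrec_ne heq).symm
  rintro (_ | k) hk
  · contradiction
  · exact le_succ_of_min_sqrt_add_div_mul_le (one_le_one_div hbeta0 hbeta1)
      (div_pos halpha hL).le hl0.le hfirst hstep k

/-- Stepsize lower bound `λ_k ≥ α/L` for the general update of adaptive gradient descent
with `α ∈ (0, 1/2]`. -/
theorem adgd_general_stepsize_lower_bound_small_alpha {d : ℕ}
    (alpha beta : ℝ) (halpha0 : 0 < alpha) (halpha1 : alpha ≤ 1 / 2)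
    (hbeta : beta = 1 / (2 * (1 - alpha)))
    (f : EuclideanSpace ℝ (Fin d) → ℝ)
    (f' : EuclideanSpace ℝ (Fin d) → EuclideanSpace ℝ (Fin d))
    (hdiff : ∀ x, HasGradientAt f (f' x) x)
    (C : Set (EuclideanSpace ℝ (Fin d))) (L : ℝ) (hL : 0 < L)
    (hLip : ∀ x ∈ C, ∀ y ∈ C, ‖f' x - f' y‖ ≤ L * ‖x - y‖)
    (x : ℕ → EuclideanSpace ℝ (Fin d)) (hxC : ∀ k, x k ∈ C)
    (lam : ℕ → ℝ) (hl0 : 0 < lam 0)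
    (hupd : ∀ k, x (k + 1) = x k - lam k • f' (x k))
    (hne1 : f' (x 1) ≠ f' (x 0))
    (hl1 : lam 1 = alpha * ‖x 1 - x 0‖ / ‖f' (x 1) - f' (x 0)‖)
    (hrec : ∀ k, 2 ≤ k →
      (f' (x k) ≠ f' (x (k - 1)) →
        lam k = min (Real.sqrt (1 / beta + lam (k - 1) / lam (k - 2)) * lam (k - 1))
          (alpha * ‖x k - x (k - 1)‖ / ‖f' (x k) - f' (x (k - 1))‖)) ∧
      (f' (x k) = f' (x (k - 1)) →
        lam k = Real.sqrt (1 / beta + lam (k - 1) / lam (k - 2)) * lam (k - 1))) :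
    ∀ k, 1 ≤ k → alpha / L ≤ lam k := by
  have hden : 1 ≤ 2 * (1 - alpha) := by linarith
  exact adgd_general_stepsize_lower_bound_small_alpha_general halpha0
    (hbeta ▸ one_div_pos.mpr (by linarith)) (hbeta ▸ div_le_one_of_le₀ hden (by linarith))
    hL hLip hxC hl0 hne1 hl1 hrec
end

section
/- Let α ∈ (1/2, 1) and β = 1/(2(1−α)) (so β > 1). Let f : ℝ^d → ℝ be differentiable, let C ⊆ ℝ^d, and let L > 0 be such that ‖∇f(x) − ∇f(y)‖ ≤ L‖x − y‖ for all x, y ∈ C. Let (x^k)_{k≥0} ⊆ C and (λ_k) satisfy λ₀ > 0, x^{k+1} = x^k − λ_k∇f(x^k) for all k ≥ 0, ∇f(x¹) ≠ ∇f(x⁰) with λ₁ = α‖x¹ − x⁰‖/‖∇f(x¹) − ∇f(x⁰)‖, and for k ≥ 2, λ_k = min{√(1/β + θ_{k−1})·λ_{k−1}, α‖x^k − x^{k−1}‖/‖∇f(x^k) − ∇f(x^{k−1})‖} when ∇f(x^k) ≠ ∇f(x^{k−1}) and λ_k = √(1/β + θ_{k−1})·λ_{k−1} otherwise, where θ_k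 = λ_k/λ_{k−1}. Then λ_k ≥ 2α(1−α)/L for all k ≥ 1. -/
open scoped RealInnerProductSpace

/-!
Write `c = 1/β`, `θ_k = λ_k/λ_{k-1}` and `m = min 1 c · α/L`. The invariant is `m ≤ λ_k` together
with `m ≤ (c + θ_k) λ_k`. A growth step `λ_{k+1} = √(c + θ_k) λ_k` is the geometric mean of `λ_k`
and `(c + θ_k) λ_k`, so it is at least `m`, and `θ_{k+1} λ_{k+1} = (c + θ_k) λ_k`, so the second
inequality persists as well. Any other step is at least `α/L` by the Lipschitz bound, and then both
inequalities are immediate.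
-/

/-- The invariant of the stepsize recursion for consecutive stepsizes `p = λ_{k-1}` and `q = λ_k`
with `c = 1/β`: both `λ_k` and `(c + θ_k) λ_k`, whose geometric mean is the growth step
`√(c + θ_k) λ_k`, are at least `m`. -/
structure GrowthInvariant (c m p q : ℝ) : Prop where
  le_step : m ≤ q
  le_add_ratio_mul_step : m ≤ (c + q / p) * q

section GrowthStep

variable {m c s p q r : ℝ}

theorem le_sqrt_mul_of_le_of_le_mul (hm : 0 ≤ m) (hs : 0 ≤ s) (hq : m ≤ q) (hsq : m ≤ s * q) :
    m ≤ √s * q := by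
  have hq₀ : 0 ≤ q := hm.trans hq
  refine le_of_sq_le_sq ?_ (by positivity)
  calc m ^ 2 = m * m := sq m
    _ ≤ s * q * q := by gcongr
    _ = (√s * q) ^ 2 := by rw [mul_pow, Real.sq_sqrt hs]; ring

theorem sqrt_mul_div_mul_sqrt_mul (hs : 0 ≤ s) (hq : q ≠ 0) :
    √s * q / q * (√s * q) = s * q := by
  rw [mul_div_cancel_right₀ _ hq, ← mul_assoc, Real.mul_self_sqrt hs]

theorem GrowthInvariant.sqrt_step (h : GrowthInvariant c m p q) (hm : 0 < m) (hc : 0 ≤ c)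
    (hp : 0 < p) (hr : r = √(c + q / p) * q) : GrowthInvariant c m q r := by
  have hq₀ : 0 < q := hm.trans_le h.le_step
  have hs : 0 ≤ c + q / p := by positivity
  have hmr : m ≤ r :=
    hr ▸ le_sqrt_mul_of_le_of_le_mul hm.le hs h.le_step h.le_add_ratio_mul_step
  refine ⟨hmr, ?_⟩
  calc m ≤ (c + q / p) * q := h.le_add_ratio_mul_step
    _ = r / q * r := by rw [hr, sqrt_mul_div_mul_sqrt_mul hs hq₀.ne']
    _ ≤ (c + r / q) * r := by
      gcongr
      · exact hm.le.trans hmr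
      · exact le_add_of_nonneg_left hc

theorem GrowthInvariant.of_le {a : ℝ} (ha : 0 ≤ a) (hc : 0 ≤ c) (hq : 0 ≤ q) (hr : a ≤ r) :
    GrowthInvariant c (min 1 c * a) q r := by
  have hr₀ : 0 ≤ r := ha.trans hr
  constructor
  · calc min 1 c * a ≤ 1 * a := by gcongr; exact min_le_left 1 c
      _ ≤ r := by rwa [one_mul]
  · calc min 1 c * a ≤ c * r := by gcongr; exact min_le_right 1 c
      _ ≤ (c + r / q) * r := by
        gcongr
        exact le_add_of_nonneg_right (by positivity)

end GrowthStep

theorem min_one_mul_le_of_stepsize_recursion {a c : ℝ} {lam : ℕ → ℝ} (ha : 0 < a) (hc : 0 < c)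
    (hlam₀ : 0 < lam 0) (hlam₁ : a ≤ lam 1)
    (hstep : ∀ n, a ≤ lam (n + 2) ∨ lam (n + 2) = √(c + lam (n + 1) / lam n) * lam (n + 1))
    (n : ℕ) : min 1 c * a ≤ lam (n + 1) := by
  have hm : 0 < min 1 c * a := by positivity
  suffices invariant :
      0 < lam n ∧ GrowthInvariant c (min 1 c * a) (lam n) (lam (n + 1)) from invariant.2.le_step
  induction n with
  | zero => exact ⟨hlam₀, .of_le ha.le hc.le hlam₀.le hlam₁⟩
  | succ n ih =>
    obtain ⟨hpos, hinv⟩ := ih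
    have hpos' : 0 < lam (n + 1) := hm.trans_le hinv.le_step
    refine ⟨hpos', ?_⟩
    rcases hstep n with hlarge | hsqrt
    · exact .of_le ha.le hc.le hpos'.le hlarge
    · exact hinv.sqrt_step hm hc.le hpos hsqrt

theorem div_le_mul_dist_div_dist {X Y : Type*} [PseudoMetricSpace X] [MetricSpace Y]
    {alpha L : ℝ} {x x' : X} {y y' : Y} (halpha : 0 ≤ alpha) (hL : 0 < L) (hne : y ≠ y')
    (hLip : dist y y' ≤ L * dist x x') :
    alpha / L ≤ alpha * dist x x' / dist y y' := by
  rw [div_le_div_iff₀ hL (dist_pos.mpr hne)]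
  calc alpha * dist y y' ≤ alpha * (L * dist x x') := by gcongr
    _ = alpha * dist x x' * L := by ring

theorem adgd_general_stepsize_lower_bound_large_alpha_general {X Y : Type*}
    [PseudoMetricSpace X] [MetricSpace Y] {alpha beta L : ℝ}
    (halpha : 0 < alpha) (hbeta : 0 < beta) (hL : 0 < L) {g : X → Y} {x : ℕ → X}
    (hLip : ∀ k, dist (g (x (k + 1))) (g (x k)) ≤ L * dist (x (k + 1)) (x k))
    {lam : ℕ → ℝ} (hlam₀ : 0 < lam 0) (hne : g (x 1) ≠ g (x 0))
    (hlam₁ : lam 1 = alpha * dist (x 1) (x 0) / dist (g (x 1)) (g (x 0)))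
    (hrec : ∀ k,
      (g (x (k + 2)) ≠ g (x (k + 1)) →
        lam (k + 2) = min (√(1 / beta + lam (k + 1) / lam k) * lam (k + 1))
          (alpha * dist (x (k + 2)) (x (k + 1)) / dist (g (x (k + 2))) (g (x (k + 1))))) ∧
      (g (x (k + 2)) = g (x (k + 1)) →
        lam (k + 2) = √(1 / beta + lam (k + 1) / lam k) * lam (k + 1)))
    (k : ℕ) : min 1 (1 / beta) * (alpha / L) ≤ lam (k + 1) := by
  have hquot (n : ℕ) (hn : g (x (n + 1)) ≠ g (x n)) :
      alpha / L ≤ alpha * dist (x (n + 1)) (x n) / dist (g (x (n + 1))) (g (x n)) :=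
    div_le_mul_dist_div_dist halpha.le hL hn (hLip n)
  refine min_one_mul_le_of_stepsize_recursion (by positivity) (by positivity) hlam₀
    (hlam₁ ▸ hquot 0 hne) (fun n ↦ ?_) k
  by_cases heq : g (x (n + 2)) = g (x (n + 1))
  · exact .inr ((hrec n).2 heq)
  · rw [(hrec n).1 heq]
    rcases min_choice (√(1 / beta + lam (n + 1) / lam n) * lam (n + 1))
      (alpha * dist (x (n + 2)) (x (n + 1)) / dist (g (x (n + 2))) (g (x (n + 1))))
      with hmin | hmin
    · exact .inr hmin
    · exact .inl ((hquot (n + 1) heq).trans_eq hmin.symm)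

/-- Stepsize lower bound `λ_k ≥ 2α(1−α)/L` for the general update of adaptive gradient descent
with `α ∈ (1/2, 1)`. -/
theorem adgd_general_stepsize_lower_bound_large_alpha {d : ℕ}
    (alpha beta : ℝ) (halpha0 : 1 / 2 < alpha) (halpha1 : alpha < 1)
    (hbeta : beta = 1 / (2 * (1 - alpha)))
    (f : EuclideanSpace ℝ (Fin d) → ℝ)
    (f' : EuclideanSpace ℝ (Fin d) → EuclideanSpace ℝ (Fin d))
    (hdiff : ∀ x, HasGradientAt f (f' x) x)
    (C : Set (EuclideanSpace ℝ (Fin d))) (L : ℝ) (hL : 0 < L)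
    (hLip : ∀ x ∈ C, ∀ y ∈ C, ‖f' x - f' y‖ ≤ L * ‖x - y‖)
    (x : ℕ → EuclideanSpace ℝ (Fin d)) (hxC : ∀ k, x k ∈ C)
    (lam : ℕ → ℝ) (hl0 : 0 < lam 0)
    (hupd : ∀ k, x (k + 1) = x k - lam k • f' (x k))
    (hne1 : f' (x 1) ≠ f' (x 0))
    (hl1 : lam 1 = alpha * ‖x 1 - x 0‖ / ‖f' (x 1) - f' (x 0)‖)
    (hrec : ∀ k, 2 ≤ k →
      (f' (x k) ≠ f' (x (k - 1)) →
        lam k = min (Real.sqrt (1 / beta + lam (k - 1) / lam (k - 2)) * lam (k - 1))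
          (alpha * ‖x k - x (k - 1)‖ / ‖f' (x k) - f' (x (k - 1))‖)) ∧
      (f' (x k) = f' (x (k - 1)) →
        lam k = Real.sqrt (1 / beta + lam (k - 1) / lam (k - 2)) * lam (k - 1))) :
    ∀ k, 1 ≤ k → 2 * alpha * (1 - alpha) / L ≤ lam k := by
  rintro (_ | k) hk
  · contradiction
  have hinv : 1 / beta = 2 * (1 - alpha) := by rw [hbeta, one_div_one_div]
  have hbound : min 1 (1 / beta) * (alpha / L) = 2 * alpha * (1 - alpha) / L := by
    rw [hinv, min_eq_right (by linarith)]
    ring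
  simp only [← dist_eq_norm] at hLip hl1 hrec
  exact hbound ▸ adgd_general_stepsize_lower_bound_large_alpha_general (by linarith)
    (one_div_pos.mp (by linarith)) hL (fun _ ↦ hLip _ (hxC _) _ (hxC _)) hl0 hne1 hl1
    (fun n ↦ hrec (n + 2) (Nat.le_add_left 2 n)) k
end

section
/- Let α ∈ (0,1) and β = 1/(2(1−α)). Let f : ℝ^d → ℝ be convex and differentiable, x* a minimizer of f with f* = f(x*), and let (x^k)_{k≥0} and (λ_k)_{k≥0} with λ_k > 0 satisfy x^{k+1} = x^k − λ_k∇f(x^k) for all k ≥ 0, and for all k ≥ 1 the conditions λ_k‖∇f(x^k) − ∇f(x^{k−1})‖ ≤ α‖x^k − x^{k−1}‖ and λ_{k+1}² ≤ (1/β + θ_k)λ_k², where θ_k = λ_k/λ_{k−1}. Define D = ‖x¹ − x*‖² + αβ‖x¹ − x⁰‖² + 2λ₁θ₁β(f(x⁰) − f*), weights w_i = λ_i(1 + θ_iβ) − λ_{i+1}θ_{i+1}β, S_k = λ_k(1 + θ_kβ) + Σ_{i=1}^{k−1} w_i, and x̂^k = (λ_k(1+θ_kβ)x^k + Σ_{i=1}^{k−1}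 w_i x^i)/S_k. Then for every k ≥ 1, each w_i is nonnegative, S_k = Σ_{i=1}^{k} λ_i + λ₁θ₁β, and f(x̂^k) − f* ≤ D/(2S_k). -/
open scoped RealInnerProductSpace BigOperators

/-- The weights `w_i = λ_i (1 + θ_i β) − λ_{i+1} θ_{i+1} β` of Theorem 4 (general update). -/
noncomputable def adgdWGen (beta : ℝ) (lam : ℕ → ℝ) (i : ℕ) : ℝ :=
  lam i * (1 + (lam i / lam (i - 1)) * beta) - lam (i + 1) * ((lam (i + 1) / lam i) * beta)

/-- The normalization `S_k = λ_k (1 + θ_k β) + Σ_{i=1}^{k−1} w_i` of Theorem 4. -/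
noncomputable def adgdSGen (beta : ℝ) (lam : ℕ → ℝ) (k : ℕ) : ℝ :=
  lam k * (1 + (lam k / lam (k - 1)) * beta) + ∑ i ∈ Finset.Icc 1 (k - 1), adgdWGen beta lam i

/-- The ergodic iterate `x̂^k` of Theorem 4. -/
noncomputable def adgdXhatGen {d : ℕ} (beta : ℝ) (lam : ℕ → ℝ)
    (x : ℕ → EuclideanSpace ℝ (Fin d)) (k : ℕ) : EuclideanSpace ℝ (Fin d) :=
  (adgdSGen beta lam k)⁻¹ •
    ((lam k * (1 + (lam k / lam (k - 1)) * beta)) • x k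
      + ∑ i ∈ Finset.Icc 1 (k - 1), adgdWGen beta lam i • x i)

/-!
Writing `θ_k = λ_k / λ_{k-1}`, consider the energy
`E_k = ‖x^k - z‖² + αβ ‖x^k - x^{k-1}‖² + 2 λ_k θ_k β (f (x^{k-1}) - f z)`.
Expanding `‖x^{k+1} - z‖²` leaves the error term `‖x^{k+1} - x^k‖²`. Replacing one of its two
factors by a multiple of `x^k - x^{k-1}`, up to the gradient difference, and using convexity bounds
it by `λ_k θ_k (f (x^{k-1}) - f (x^k))` plus a term controlled by the curvature condition.
Multiplied by `2β`, this bound gives `E_{k+1} + 2 w_k (f (x^k) - f z) ≤ E_k`. Telescoping bounds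
the weighted sum of the gaps `f (x^i) - f z`, and Jensen's inequality concludes.
-/

namespace AdaptiveGD

section Weights

variable {β : ℝ} {lam : ℕ → ℝ}

/-- The coefficient `λ_k θ_k β` of the gap at `x^{k-1}` in the energy at time `k`. -/
noncomputable def carryWeight (β : ℝ) (lam : ℕ → ℝ) (k : ℕ) : ℝ :=
  lam k * (lam k / lam (k - 1) * β)

/-- The coefficient `λ_k (1 + θ_k β)` of the last iterate `x^k` in the ergodic average. -/
noncomputable def lastWeight (β : ℝ) (lam : ℕ → ℝ) (k : ℕ) : ℝ :=
  lam k * (1 + lam k / lam (k - 1) * β)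

theorem lastWeight_eq_add_carryWeight (β : ℝ) (lam : ℕ → ℝ) (k : ℕ) :
    lastWeight β lam k = lam k + carryWeight β lam k := by
  unfold lastWeight carryWeight
  ring

theorem adgdWGen_eq_lastWeight_sub_carryWeight (β : ℝ) (lam : ℕ → ℝ) (i : ℕ) :
    adgdWGen β lam i = lastWeight β lam i - carryWeight β lam (i + 1) :=
  rfl

theorem adgdSGen_succ (β : ℝ) (lam : ℕ → ℝ) (n : ℕ) :
    adgdSGen β lam (n + 1) =
      lastWeight β lam (n + 1) + ∑ i ∈ Finset.Icc 1 n, adgdWGen β lam i :=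
  rfl

theorem carryWeight_nonneg (hβ : 0 ≤ β) (hlam : ∀ k, 0 < lam k) (k : ℕ) :
    0 ≤ carryWeight β lam k :=
  mul_nonneg (hlam k).le (mul_nonneg (div_pos (hlam k) (hlam (k - 1))).le hβ)

theorem lastWeight_nonneg (hβ : 0 ≤ β) (hlam : ∀ k, 0 < lam k) (k : ℕ) :
    0 ≤ lastWeight β lam k := by
  rw [lastWeight_eq_add_carryWeight]
  exact add_nonneg (hlam k).le (carryWeight_nonneg hβ hlam k)

theorem adgdWGen_nonneg (hβ : 0 < β) {i : ℕ} (hi : 0 < lam i)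
    (hgrowth : lam (i + 1) ^ 2 ≤ (1 / β + lam i / lam (i - 1)) * lam i ^ 2) :
    0 ≤ adgdWGen β lam i := by
  have weight_eq : adgdWGen β lam i =
      β / lam i * ((1 / β + lam i / lam (i - 1)) * lam i ^ 2 - lam (i + 1) ^ 2) := by
    unfold adgdWGen
    generalize lam i / lam (i - 1) = θ
    field_simp
  rw [weight_eq]
  exact mul_nonneg (div_pos hβ hi).le (sub_nonneg.2 hgrowth)

theorem adgdSGen_succ_succ (β : ℝ) (lam : ℕ → ℝ) (n : ℕ) :
    adgdSGen β lam (n + 2) = adgdSGen β lam (n + 1) + lam (n + 2) := by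
  rw [adgdSGen_succ, adgdSGen_succ, Finset.sum_Icc_succ_top n.succ_pos,
    adgdWGen_eq_lastWeight_sub_carryWeight, lastWeight_eq_add_carryWeight β lam (n + 2)]
  ring

theorem adgdSGen_eq_sum_add_carryWeight (β : ℝ) (lam : ℕ → ℝ) (n : ℕ) :
    adgdSGen β lam (n + 1) = ∑ i ∈ Finset.Icc 1 (n + 1), lam i + carryWeight β lam 1 := by
  induction n with
  | zero => simp [adgdSGen_succ, lastWeight_eq_add_carryWeight]
  | succ n ih =>
    rw [adgdSGen_succ_succ, ih, Finset.sum_Icc_succ_top (n + 1).succ_pos]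
    ring

theorem adgdSGen_pos (hβ : 0 ≤ β) (hlam : ∀ k, 0 < lam k) (n : ℕ) :
    0 < adgdSGen β lam (n + 1) := by
  rw [adgdSGen_eq_sum_add_carryWeight]
  exact add_pos_of_pos_of_nonneg
    (Finset.sum_pos (fun i _ => hlam i) (Finset.nonempty_Icc.2 n.succ_pos))
    (carryWeight_nonneg hβ hlam 1)

end Weights

section ErgodicAverage

variable {E : Type*} [AddCommGroup E] [Module ℝ E] {β : ℝ} {lam : ℕ → ℝ}

/-- The weighted average `x̂^k` of a sequence in an arbitrary real vector space. Taking the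
sequence `f (x^i)` of reals gives the averaged objective values. -/
noncomputable def ergodicAverage (β : ℝ) (lam : ℕ → ℝ) (x : ℕ → E) (k : ℕ) : E :=
  (adgdSGen β lam k)⁻¹ •
    (lastWeight β lam k • x k + ∑ i ∈ Finset.Icc 1 (k - 1), adgdWGen β lam i • x i)

theorem map_ergodicAverage_le {f : E → ℝ} (hf : ConvexOn ℝ Set.univ f) (x : ℕ → E) {k : ℕ}
    (hS : 0 < adgdSGen β lam k) (hlast : 0 ≤ lastWeight β lam k)
    (hw : ∀ i ∈ Finset.Icc 1 (k - 1), 0 ≤ adgdWGen β lam i) :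
    f (ergodicAverage β lam x k) ≤ ergodicAverage β lam (f ∘ x) k := by
  have hS' : 0 ≤ (adgdSGen β lam k)⁻¹ := (inv_pos.2 hS).le
  have total_eq_one : (adgdSGen β lam k)⁻¹ * lastWeight β lam k
      + ∑ i ∈ Finset.Icc 1 (k - 1), (adgdSGen β lam k)⁻¹ * adgdWGen β lam i = 1 := by
    rw [← Finset.mul_sum, ← mul_add]
    exact inv_mul_cancel₀ hS.ne'
  simpa only [ergodicAverage, smul_add, Finset.smul_sum, smul_smul, Function.comp_apply] using
    hf.map_add_sum_le (p := x) (fun i hi => mul_nonneg hS' (hw i hi)) total_eq_one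
      (fun _ _ => Set.mem_univ _) (mul_nonneg hS' hlast) (Set.mem_univ (x k))

theorem adgdSGen_mul_ergodicAverage_sub {n : ℕ} (hS : adgdSGen β lam (n + 1) ≠ 0)
    (u : ℕ → ℝ) (c : ℝ) :
    adgdSGen β lam (n + 1) * (ergodicAverage β lam u (n + 1) - c) =
      lastWeight β lam (n + 1) * (u (n + 1) - c)
        + ∑ i ∈ Finset.Icc 1 n, adgdWGen β lam i * (u i - c) := by
  have mul_average : adgdSGen β lam (n + 1) * ergodicAverage β lam u (n + 1) =
      lastWeight β lam (n + 1) * u (n + 1) + ∑ i ∈ Finset.Icc 1 n, adgdWGen β lam i * u i :=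
    mul_inv_cancel_left₀ hS _
  simp only [mul_sub, Finset.sum_sub_distrib, ← Finset.sum_mul]
  rw [mul_average, adgdSGen_succ]
  ring

end ErgodicAverage

section Descent

variable {E : Type*} [NormedAddCommGroup E] [InnerProductSpace ℝ E]

theorem convexOn_univ_of_subgradient {f : E → ℝ} {f' : E → E}
    (hf : ∀ x y, f x + ⟪f' x, y - x⟫ ≤ f y) : ConvexOn ℝ Set.univ f := by
  refine ⟨convex_univ, fun x _ y _ a b ha hb hab => ?_⟩
  set z := a • x + b • y with hz
  have slopes_cancel : a * ⟪f' z, x - z⟫ + b * ⟪f' z, y - z⟫ = 0 := by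
    rw [← inner_smul_right, ← inner_smul_right, ← inner_add_right, smul_sub, smul_sub,
      sub_add_sub_comm, ← hz, ← add_smul, hab, one_smul, sub_self, inner_zero_right]
  calc f z = a * (f z + ⟪f' z, x - z⟫) + b * (f z + ⟪f' z, y - z⟫) := by
        linear_combination -f z * hab - slopes_cancel
    _ ≤ a • f x + b • f y := by
        simp only [smul_eq_mul]
        gcongr
        · exact hf z x
        · exact hf z y

theorem norm_sub_smul_sub_sq (p g z : E) (l : ℝ) :
    ‖p - l • g - z‖ ^ 2 = ‖p - z‖ ^ 2 + 2 * (l * ⟪g, z - p⟫) + ‖l • g‖ ^ 2 := by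
  rw [sub_right_comm, norm_sub_sq_real, inner_smul_right, real_inner_comm, ← neg_sub z p,
    inner_neg_right]
  ring

theorem norm_smul_sq_eq_inner_add_inner {l l₀ : ℝ} (hl₀ : l₀ ≠ 0) (g g₀ : E) :
    ‖l • g‖ ^ 2 = l * ⟪g - g₀, l • g⟫ + l * (l / l₀) * ⟪g, l₀ • g₀⟫ := by
  rw [← real_inner_self_eq_norm_sq, inner_sub_left, real_inner_smul_left]
  simp only [inner_smul_right, real_inner_comm g g₀]
  field_simp
  ring

theorem mul_inner_le_of_mul_norm_le {l α : ℝ} {u v : E} (hl : 0 ≤ l) (hα : 0 ≤ α)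
    (h : l * ‖u‖ ≤ α * ‖v‖) (w : E) : l * ⟪u, w⟫ ≤ α / 2 * (‖v‖ ^ 2 + ‖w‖ ^ 2) := by
  calc l * ⟪u, w⟫ ≤ l * (‖u‖ * ‖w‖) := by gcongr; exact real_inner_le_norm u w
    _ = l * ‖u‖ * ‖w‖ := (mul_assoc _ _ _).symm
    _ ≤ α * ‖v‖ * ‖w‖ := by gcongr
    _ = α / 2 * (2 * ‖v‖ * ‖w‖) := by ring
    _ ≤ α / 2 * (‖v‖ ^ 2 + ‖w‖ ^ 2) := by gcongr; exact two_mul_le_add_sq _ _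

/-- The iterates `x^{k+1} = x^k - λ_k f' (x^k)` with positive step sizes satisfying the local
curvature condition, for an arbitrary vector field `f'`. -/
structure IsAdaptiveDescent (α : ℝ) (f' : E → E) (x : ℕ → E) (lam : ℕ → ℝ) : Prop where
  step_pos : ∀ k, 0 < lam k
  update : ∀ k, x (k + 1) = x k - lam k • f' (x k)
  curvature : ∀ k, 1 ≤ k → lam k * ‖f' (x k) - f' (x (k - 1))‖ ≤ α * ‖x k - x (k - 1)‖

/-- The Lyapunov function of the descent, relative to a comparison point `z`. The value at `n` is
`E_{n+1}`, so that no predecessor of an index occurs. -/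
noncomputable def energy (α β : ℝ) (f : E → ℝ) (x : ℕ → E) (lam : ℕ → ℝ) (z : E) (n : ℕ) : ℝ :=
  ‖x (n + 1) - z‖ ^ 2 + α * β * ‖x (n + 1) - x n‖ ^ 2
    + 2 * carryWeight β lam (n + 1) * (f (x n) - f z)

variable {α β : ℝ} {f : E → ℝ} {f' : E → E} {x : ℕ → E} {lam : ℕ → ℝ}

namespace IsAdaptiveDescent

theorem norm_step_sq_le (h : IsAdaptiveDescent α f' x lam) (hα : 0 ≤ α)
    (hf : ∀ x y, f x + ⟪f' x, y - x⟫ ≤ f y) (n : ℕ) :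
    ‖x (n + 2) - x (n + 1)‖ ^ 2 ≤
      α / 2 * (‖x (n + 1) - x n‖ ^ 2 + ‖x (n + 2) - x (n + 1)‖ ^ 2)
        + lam (n + 1) * (lam (n + 1) / lam n) * (f (x n) - f (x (n + 1))) := by
  have hl := h.step_pos (n + 1)
  have hl₀ := h.step_pos n
  have norm_step : ‖x (n + 2) - x (n + 1)‖ = ‖lam (n + 1) • f' (x (n + 1))‖ := by
    rw [h.update (n + 1), sub_sub_cancel_left, norm_neg]
  have previous_step : lam n • f' (x n) = x n - x (n + 1) := by
    rw [h.update n, sub_sub_cancel]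
  rw [norm_step]
  calc ‖lam (n + 1) • f' (x (n + 1))‖ ^ 2
      = lam (n + 1) * ⟪f' (x (n + 1)) - f' (x n), lam (n + 1) • f' (x (n + 1))⟫
        + lam (n + 1) * (lam (n + 1) / lam n) * ⟪f' (x (n + 1)), x n - x (n + 1)⟫ := by
        rw [← previous_step]
        exact norm_smul_sq_eq_inner_add_inner hl₀.ne' _ _
    _ ≤ _ := by
        refine add_le_add
          (mul_inner_le_of_mul_norm_le hl.le hα (h.curvature (n + 1) n.succ_pos) _) ?_
        gcongr
        exact le_sub_iff_add_le'.2 (hf (x (n + 1)) (x n))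

theorem add_lastWeight_mul_gap_le_energy (h : IsAdaptiveDescent α f' x lam) (hα : 0 ≤ α)
    (hβ : 0 ≤ β) (hαβ : 1 ≤ 2 * β * (1 - α)) (hf : ∀ x y, f x + ⟪f' x, y - x⟫ ≤ f y)
    (z : E) (n : ℕ) :
    ‖x (n + 2) - z‖ ^ 2 + α * β * ‖x (n + 2) - x (n + 1)‖ ^ 2
        + 2 * lastWeight β lam (n + 1) * (f (x (n + 1)) - f z) ≤
      energy α β f x lam z n := by
  have distance_le : ‖x (n + 2) - z‖ ^ 2 ≤ ‖x (n + 1) - z‖ ^ 2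
      + 2 * (lam (n + 1) * (f z - f (x (n + 1)))) + ‖x (n + 2) - x (n + 1)‖ ^ 2 := by
    rw [h.update (n + 1), norm_sub_smul_sub_sq, sub_sub_cancel_left, norm_neg]
    have hl := (h.step_pos (n + 1)).le
    gcongr
    exact le_sub_iff_add_le'.2 (hf (x (n + 1)) z)
  have step_le := mul_le_mul_of_nonneg_left (h.norm_step_sq_le hα hf n)
    (mul_nonneg zero_le_two hβ)
  have absorb := mul_le_mul_of_nonneg_right hαβ (sq_nonneg ‖x (n + 2) - x (n + 1)‖)
  have carry_eq : carryWeight β lam (n + 1) = β * (lam (n + 1) * (lam (n + 1) / lam n)) := by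
    simp only [carryWeight, Nat.add_sub_cancel]
    ring
  rw [energy, lastWeight_eq_add_carryWeight, carry_eq]
  linarith

theorem energy_succ_add_le (h : IsAdaptiveDescent α f' x lam) (hα : 0 ≤ α)
    (hβ : 0 ≤ β) (hαβ : 1 ≤ 2 * β * (1 - α)) (hf : ∀ x y, f x + ⟪f' x, y - x⟫ ≤ f y)
    (z : E) (n : ℕ) :
    energy α β f x lam z (n + 1) + 2 * (adgdWGen β lam (n + 1) * (f (x (n + 1)) - f z)) ≤
      energy α β f x lam z n := by
  refine le_of_eq_of_le ?_ (h.add_lastWeight_mul_gap_le_energy hα hβ hαβ hf z n)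
  rw [energy, adgdWGen_eq_lastWeight_sub_carryWeight]
  ring

theorem energy_add_sum_le (h : IsAdaptiveDescent α f' x lam) (hα : 0 ≤ α)
    (hβ : 0 ≤ β) (hαβ : 1 ≤ 2 * β * (1 - α)) (hf : ∀ x y, f x + ⟪f' x, y - x⟫ ≤ f y)
    (z : E) (n : ℕ) :
    energy α β f x lam z n + 2 * ∑ i ∈ Finset.Icc 1 n, adgdWGen β lam i * (f (x i) - f z) ≤
      energy α β f x lam z 0 := by
  induction n with
  | zero => simp
  | succ n ih =>
    rw [Finset.sum_Icc_succ_top n.succ_pos]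
    linarith [h.energy_succ_add_le hα hβ hαβ hf z n]

theorem ergodicAverage_gap_le (h : IsAdaptiveDescent α f' x lam) (hα : 0 ≤ α)
    (hβ : 0 ≤ β) (hαβ : 1 ≤ 2 * β * (1 - α)) (hf : ∀ x y, f x + ⟪f' x, y - x⟫ ≤ f y)
    (z : E) (n : ℕ) :
    ergodicAverage β lam (f ∘ x) (n + 1) - f z ≤
      energy α β f x lam z 0 / (2 * adgdSGen β lam (n + 1)) := by
  have hS := adgdSGen_pos hβ h.step_pos n
  have last_step := h.add_lastWeight_mul_gap_le_energy hα hβ hαβ hf z n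
  have telescoped := h.energy_add_sum_le hα hβ hαβ hf z n
  have distance_nonneg := sq_nonneg ‖x (n + 2) - z‖
  have step_nonneg := mul_nonneg (mul_nonneg hα hβ) (sq_nonneg ‖x (n + 2) - x (n + 1)‖)
  have average_eq := adgdSGen_mul_ergodicAverage_sub hS.ne' (f ∘ x) (f z)
  simp only [Function.comp_apply] at average_eq
  rw [le_div_iff₀ (mul_pos two_pos hS)]
  linarith

end IsAdaptiveDescent

end Descent

end AdaptiveGD

open AdaptiveGD in
theorem adgd_general_ergodic_rate_general
    {E : Type*} [NormedAddCommGroup E] [InnerProductSpace ℝ E]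
    {α β : ℝ} (hα₀ : 0 ≤ α) (hα₁ : α < 1) (hβ : 1 / (2 * (1 - α)) ≤ β)
    {f : E → ℝ} {f' : E → E} (hf : ∀ x y, f x + ⟪f' x, y - x⟫ ≤ f y) (z : E)
    {x : ℕ → E} {lam : ℕ → ℝ} (hx : IsAdaptiveDescent α f' x lam)
    (hgrowth : ∀ k, 1 ≤ k → lam (k + 1) ^ 2 ≤ (1 / β + lam k / lam (k - 1)) * lam k ^ 2)
    (k : ℕ) (hk : 1 ≤ k) :
    (∀ i ∈ Finset.Icc 1 (k - 1), 0 ≤ adgdWGen β lam i) ∧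
    adgdSGen β lam k = (∑ i ∈ Finset.Icc 1 k, lam i) + lam 1 * (lam 1 / lam 0) * β ∧
    f (ergodicAverage β lam x k) - f z ≤
      (‖x 1 - z‖ ^ 2 + α * β * ‖x 1 - x 0‖ ^ 2
          + 2 * lam 1 * (lam 1 / lam 0) * β * (f (x 0) - f z))
        / (2 * adgdSGen β lam k) := by
  obtain ⟨n, rfl⟩ := Nat.exists_eq_add_of_le' hk
  have hα_pos : 0 < 2 * (1 - α) := mul_pos two_pos (sub_pos.2 hα₁)
  have hβ_pos : 0 < β := (one_div_pos.2 hα_pos).trans_le hβ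
  have hαβ : 1 ≤ 2 * β * (1 - α) := by linarith [(div_le_iff₀ hα_pos).1 hβ]
  have weights_nonneg : ∀ i ∈ Finset.Icc 1 n, 0 ≤ adgdWGen β lam i := fun i hi =>
    adgdWGen_nonneg hβ_pos (hx.step_pos i) (hgrowth i (Finset.mem_Icc.1 hi).1)
  have carry_eq : carryWeight β lam 1 = lam 1 * (lam 1 / lam 0) * β := (mul_assoc _ _ _).symm
  refine ⟨weights_nonneg, carry_eq ▸ adgdSGen_eq_sum_add_carryWeight β lam n, ?_⟩
  have jensen := map_ergodicAverage_le (convexOn_univ_of_subgradient hf) x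
    (adgdSGen_pos hβ_pos.le hx.step_pos n) (lastWeight_nonneg hβ_pos.le hx.step_pos (n + 1))
    weights_nonneg
  have rate := hx.ergodicAverage_gap_le hα₀ hβ_pos.le hαβ hf z n
  rw [energy, carry_eq, ← mul_assoc, ← mul_assoc] at rate
  exact (sub_le_sub_right jensen (f z)).trans rate

/-- Theorem 4 of "Adaptive gradient descent without descent" (general update, complexity
part): nonnegative weights, `S_k = Σ_{i=1}^k λ_i + λ₁θ₁β`, and `f(x̂^k) − f* ≤ D/(2S_k)`. -/
theorem adgd_general_ergodic_rate {d : ℕ}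
    (alpha beta : ℝ) (halpha0 : 0 < alpha) (halpha1 : alpha < 1)
    (hbeta : beta = 1 / (2 * (1 - alpha)))
    (f : EuclideanSpace ℝ (Fin d) → ℝ)
    (f' : EuclideanSpace ℝ (Fin d) → EuclideanSpace ℝ (Fin d))
    (hdiff : ∀ x, HasGradientAt f (f' x) x)
    (hconv : ∀ x y, f x + ⟪f' x, y - x⟫ ≤ f y)
    (xstar : EuclideanSpace ℝ (Fin d)) (hmin : ∀ y, f xstar ≤ f y)
    (x : ℕ → EuclideanSpace ℝ (Fin d)) (lam : ℕ → ℝ)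
    (hlam : ∀ k, 0 < lam k)
    (hupd : ∀ k, x (k + 1) = x k - lam k • f' (x k))
    (hstep1 : ∀ k, 1 ≤ k → lam k * ‖f' (x k) - f' (x (k - 1))‖ ≤ alpha * ‖x k - x (k - 1)‖)
    (hstep2 : ∀ k, 1 ≤ k → lam (k + 1) ^ 2 ≤ (1 / beta + lam k / lam (k - 1)) * lam k ^ 2) :
    ∀ k, 1 ≤ k →
      (∀ i ∈ Finset.Icc 1 (k - 1), 0 ≤ adgdWGen beta lam i) ∧
      adgdSGen beta lam k = (∑ i ∈ Finset.Icc 1 k, lam i) + lam 1 * (lam 1 / lam 0) * beta ∧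
      f (adgdXhatGen beta lam x k) - f xstar ≤
        (‖x 1 - xstar‖ ^ 2 + alpha * beta * ‖x 1 - x 0‖ ^ 2
            + 2 * lam 1 * (lam 1 / lam 0) * beta * (f (x 0) - f xstar))
          / (2 * adgdSGen beta lam k) :=
  adgd_general_ergodic_rate_general halpha0.le halpha1 hbeta.ge hconv xstar
    ⟨hlam, hupd, hstep1⟩ hstep2
end
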